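/- arXiv:2104.00989 — 7 statements merged into one kernel-verified Lean document; each statement's English description precedes it below -/
import Mathlib

section
/- For all natural numbers m and n, the identity ∑_{k=1}^{m} q^{n−m−1+2k} − ∑_{k=m+1}^{m+n} q^{3m+n+1−2k} = [m−n] holds in K = RatFunc ℚ. (This is the paper's claim that under the Reshetikhin–Turaev functor for U_q(gl(m|n)), a clockwise or counter-clockwise oriented circle evaluates to the quantum integer [m−n]: it is the composite of the coevaluation 1 ↦ ∑_k x_k ⊗ x_k* with the weighted evaluation x_k ⊗ x_k* ↦ q^{n−m−1+2k} for k ≤ m and x_k ⊗ x_k* ↦ −q^{3m+n+1−2k} for k > m.) -/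
noncomputable section

/-- The base field `K = ℚ(q)`. -/
abbrev K : Type := RatFunc ℚ

/-- The variable `q`. -/
def q : K := RatFunc.X

/-- The quantum integer `[d] = (q^d - q^{-d})/(q - q⁻¹)`. -/
def qint (d : ℤ) : K := (q ^ d - q ^ (-d)) / (q - q⁻¹)

section DivisionRing

variable {F : Type*} [DivisionRing F] {x : F} {l u : ℕ}

theorem sum_Icc_zpow_add_two_mul_mul_sub_inv (hx : x ≠ 0) (hlu : l ≤ u) (a : ℤ) :
    (∑ k ∈ Finset.Icc (l + 1) u, x ^ (a + 2 * (k : ℤ))) * (x - x⁻¹)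
      = x ^ (a + 2 * (u : ℤ) + 1) - x ^ (a + 2 * (l : ℤ) + 1) := by
  have term_eq_sub (k : ℕ) : x ^ (a + 2 * (k : ℤ)) * (x - x⁻¹)
      = x ^ (a + 2 * ((k + 1 : ℕ) : ℤ) - 1) - x ^ (a + 2 * (k : ℤ) - 1) := by
    rw [mul_sub, ← zpow_add_one₀ hx, ← zpow_sub_one₀ hx]
    congr 2
    push_cast
    ring
  simp only [Finset.sum_mul, term_eq_sub]
  rw [← Finset.Ico_add_one_right_eq_Icc,
    Finset.sum_Ico_sub (fun k : ℕ ↦ x ^ (a + 2 * (k : ℤ) - 1)) (by lia)]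
  congr 2 <;> push_cast <;> ring

theorem sum_Icc_zpow_sub_two_mul_mul_sub_inv (hx : x ≠ 0) (hlu : l ≤ u) (a : ℤ) :
    (∑ k ∈ Finset.Icc (l + 1) u, x ^ (a - 2 * (k : ℤ))) * (x - x⁻¹)
      = x ^ (a - 2 * (l : ℤ) - 1) - x ^ (a - 2 * (u : ℤ) - 1) := by
  have ascending := sum_Icc_zpow_add_two_mul_mul_sub_inv (inv_ne_zero hx) hlu (-a)
  simp only [inv_zpow', inv_inv] at ascending
  rw [← neg_inj, ← mul_neg, neg_sub, neg_sub]
  convert ascending using 3 <;> ring_nf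

theorem circle_evaluates_to_qint_general (hx : x - x⁻¹ ≠ 0) (m n : ℕ) :
    (∑ k ∈ Finset.Icc 1 m, x ^ ((n : ℤ) - (m : ℤ) - 1 + 2 * (k : ℤ)))
      - (∑ k ∈ Finset.Icc (m + 1) (m + n), x ^ (3 * (m : ℤ) + (n : ℤ) + 1 - 2 * (k : ℤ)))
      = (x ^ ((m : ℤ) - (n : ℤ)) - x ^ (-((m : ℤ) - (n : ℤ)))) / (x - x⁻¹) := by
  have hx₀ : x ≠ 0 := by
    rintro rfl
    simp at hx
  -- After multiplication by `x - x⁻¹` both sums telescope, and the terms `x ^ (m + n)` cancel.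
  have even_part : (∑ k ∈ Finset.Icc 1 m, x ^ ((n : ℤ) - m - 1 + 2 * (k : ℤ))) * (x - x⁻¹)
      = x ^ ((m : ℤ) + n) - x ^ (-((m : ℤ) - n)) := by
    convert sum_Icc_zpow_add_two_mul_mul_sub_inv hx₀ m.zero_le ((n : ℤ) - m - 1) using 3 <;>
      push_cast <;> ring
  have odd_part : (∑ k ∈ Finset.Icc (m + 1) (m + n), x ^ (3 * (m : ℤ) + n + 1 - 2 * (k : ℤ)))
      * (x - x⁻¹) = x ^ ((m : ℤ) + n) - x ^ ((m : ℤ) - n) := by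
    convert sum_Icc_zpow_sub_two_mul_mul_sub_inv hx₀ (m.le_add_right n) (3 * (m : ℤ) + n + 1)
      using 3 <;> push_cast <;> ring
  rw [eq_div_iff hx, sub_mul, even_part, odd_part, sub_sub_sub_cancel_left]

end DivisionRing

theorem ratFunc_X_sub_inv_ne_zero {F : Type*} [Field F] :
    (RatFunc.X : RatFunc F) - RatFunc.X⁻¹ ≠ 0 := by
  intro h
  have degree_eq := congrArg RatFunc.intDegree (sub_eq_zero.mp h)
  rw [RatFunc.intDegree_inv, RatFunc.intDegree_X] at degree_eq
  lia

/-- Under the Reshetikhin–Turaev functor for `U_q(gl(m|n))`, the evaluation of a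
circle (coevaluation `1 ↦ ∑ₖ xₖ ⊗ xₖ*` followed by the weighted evaluation
`xₖ ⊗ xₖ* ↦ q^{n-m-1+2k}` for `k ≤ m` and `xₖ ⊗ xₖ* ↦ -q^{3m+n+1-2k}` for `k > m`)
equals the quantum integer `[m-n]`. -/
theorem circle_evaluates_to_qint (m n : ℕ) :
    (∑ k ∈ Finset.Icc 1 m, q ^ ((n : ℤ) - (m : ℤ) - 1 + 2 * (k : ℤ)))
      - (∑ k ∈ Finset.Icc (m + 1) (m + n), q ^ (3 * (m : ℤ) + (n : ℤ) + 1 - 2 * (k : ℤ)))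
      = qint ((m : ℤ) - (n : ℤ)) :=
  circle_evaluates_to_qint_general ratFunc_X_sub_inv_ne_zero m n
end
end

section
/- The R-matrix R satisfies the Yang–Baxter equation on V ⊗ V ⊗ V: (R ⊗ Id_V) ∘ (Id_V ⊗ R) ∘ (R ⊗ Id_V) = (Id_V ⊗ R) ∘ (R ⊗ Id_V) ∘ (Id_V ⊗ R). (This is the Reidemeister III part of the paper's theorem that the explicit crossing assignment induces a functor from the quantized oriented Brauer category to representations of U_q(gl(m|n)).) -/
noncomputable section

/-- The super sign `(-1)^{|i||j|}`, where the parity `|i|` of an index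
`i : Fin (m+n)` (0-based) is `0` if `i < m` and `1` otherwise. -/
def sgn (m : ℕ) {M : ℕ} (i j : Fin M) : K :=
  if m ≤ (i : ℕ) ∧ m ≤ (j : ℕ) then -1 else 1

/-- The matrix (in the standard basis of `V ⊗ V`, `V = K^{m+n}`, indices 0-based)
of the `U_q(gl(m|n))` R-matrix: `R(eᵢ ⊗ eᵢ) = q⁻¹ eᵢ ⊗ eᵢ` for `i` of parity 0,
`R(eᵢ ⊗ eᵢ) = -q eᵢ ⊗ eᵢ` for `i` of parity 1,
`R(eᵢ ⊗ eⱼ) = (-1)^{|i||j|} eⱼ ⊗ eᵢ` for `i < j`, and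
`R(eᵢ ⊗ eⱼ) = (-1)^{|i||j|} eⱼ ⊗ eᵢ + (q⁻¹ - q) eᵢ ⊗ eⱼ` for `i > j`.
Entry `(p, r)` is the coefficient of `e_{p.1} ⊗ e_{p.2}` in `R(e_{r.1} ⊗ e_{r.2})`. -/
def Rmat (m n : ℕ) :
    Matrix (Fin (m + n) × Fin (m + n)) (Fin (m + n) × Fin (m + n)) K :=
  fun p r =>
    if r.1 = r.2 then
      (if p = r then (if (r.1 : ℕ) < m then q⁻¹ else -q) else 0)
    else
      (if p.1 = r.2 ∧ p.2 = r.1 then sgn m r.1 r.2 else 0)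
        + (if r.2 < r.1 ∧ p = r then q⁻¹ - q else 0)

/-- The matrix of `R ⊗ Id_V` acting on `V ⊗ V ⊗ V`. -/
def R12 (m n : ℕ) :
    Matrix (Fin (m + n) × Fin (m + n) × Fin (m + n))
      (Fin (m + n) × Fin (m + n) × Fin (m + n)) K :=
  fun p r => Rmat m n (p.1, p.2.1) (r.1, r.2.1) * (if p.2.2 = r.2.2 then 1 else 0)

/-- The matrix of `Id_V ⊗ R` acting on `V ⊗ V ⊗ V`. -/
def R23 (m n : ℕ) :
    Matrix (Fin (m + n) × Fin (m + n) × Fin (m + n))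
      (Fin (m + n) × Fin (m + n) × Fin (m + n)) K :=
  fun p r => (if p.1 = r.1 then 1 else 0) * Rmat m n (p.2.1, p.2.2) (r.2.1, r.2.2)

/-!
For a matrix of ice type, `eᵢ ⊗ eⱼ ↦ A i j • eᵢ ⊗ eⱼ + B i j • eⱼ ⊗ eᵢ`, both sides of the
Yang–Baxter equation send `eᵢ ⊗ eⱼ ⊗ eₖ` to a combination of the permutations of this vector.
The coefficients of `eⱼ ⊗ eₖ ⊗ eᵢ`, `eₖ ⊗ eᵢ ⊗ eⱼ` and `eₖ ⊗ eⱼ ⊗ eᵢ` always agree, and comparing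
the other three gives the star–triangle relations on `A` and `B`. For `R` the off-diagonal values
of `A` are `z = q⁻¹ - q` below the diagonal and `0` above it. The two relations quadratic in `A`
then hold by transitivity of the order, and the cubic one follows from the Hecke relation
`d ^ 2 = z * d + 1` satisfied by both diagonal values `d = q⁻¹` and `d = -q`.
-/

open scoped Kronecker Matrix

section Legs

variable {ι S : Type*} [DecidableEq ι] [MulZeroOneClass S]

/-- The operator `R ⊗ Id` on `V ⊗ V ⊗ V`, for a matrix `R` acting on `V ⊗ V`. The triple tensor
product is indexed by `ι × (ι × ι)`, whence the reassociation. -/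
def onFirstTwo (R : Matrix (ι × ι) (ι × ι) S) : Matrix (ι × ι × ι) (ι × ι × ι) S :=
  Matrix.reindex (Equiv.prodAssoc ι ι ι) (Equiv.prodAssoc ι ι ι) (R ⊗ₖ (1 : Matrix ι ι S))

/-- The operator `Id ⊗ R` on `V ⊗ V ⊗ V`, for a matrix `R` acting on `V ⊗ V`. -/
def onLastTwo (R : Matrix (ι × ι) (ι × ι) S) : Matrix (ι × ι × ι) (ι × ι × ι) S :=
  (1 : Matrix ι ι S) ⊗ₖ R

end Legs

section IceMatrix

variable {ι S : Type*} [DecidableEq ι]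

/-- The matrix of ice (six-vertex) type with weights `A` and `B`, i.e. of the operator
`eᵢ ⊗ eⱼ ↦ A i j • eᵢ ⊗ eⱼ + B i j • eⱼ ⊗ eᵢ`. On `eᵢ ⊗ eᵢ` the two weights add up. -/
def iceMatrix [AddZeroClass S] (A B : ι → ι → S) : Matrix (ι × ι) (ι × ι) S :=
  Matrix.of fun p r =>
    (if p = r then A r.1 r.2 else 0) + (if p = r.swap then B r.1 r.2 else 0)

variable [Fintype ι]

lemma onFirstTwo_iceMatrix_mulVec_single [Semiring S] (A B : ι → ι → S) (i j k : ι) :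
    onFirstTwo (iceMatrix A B) *ᵥ Pi.single (i, j, k) 1 =
      A i j • Pi.single (i, j, k) 1 + B i j • Pi.single (j, i, k) 1 := by
  ext ⟨a, b, c⟩
  by_cases hc : c = k <;> simp [onFirstTwo, iceMatrix, Pi.single_apply, hc]

lemma onLastTwo_iceMatrix_mulVec_single [Semiring S] (A B : ι → ι → S) (i j k : ι) :
    onLastTwo (iceMatrix A B) *ᵥ Pi.single (i, j, k) 1 =
      A j k • Pi.single (i, j, k) 1 + B j k • Pi.single (i, k, j) 1 := by
  ext ⟨a, b, c⟩
  by_cases ha : a = i <;> simp [onLastTwo, iceMatrix, Pi.single_apply, ha]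

theorem yang_baxter_iceMatrix [CommRing S] {A B : ι → ι → S}
    (cubic : ∀ i j k, A i j ^ 2 * A j k + B i j * B j i * A i k =
      A i j * A j k ^ 2 + B j k * B k j * A i k)
    (quadratic_left : ∀ i j k, B i j * (A i j * A j k + A j i * A i k) = B i j * (A i k * A j k))
    (quadratic_right : ∀ i j k, B j k * (A i j * A j k + A i k * A k j) = B j k * (A i j * A i k)) :
    onFirstTwo (iceMatrix A B) * onLastTwo (iceMatrix A B) * onFirstTwo (iceMatrix A B) =
      onLastTwo (iceMatrix A B) * onFirstTwo (iceMatrix A B) * onLastTwo (iceMatrix A B) := by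
  refine Matrix.ext_of_mulVec_single fun ⟨i, j, k⟩ => ?_
  simp only [← Matrix.mulVec_mulVec, Matrix.mulVec_add, Matrix.mulVec_smul,
    onFirstTwo_iceMatrix_mulVec_single, onLastTwo_iceMatrix_mulVec_single]
  linear_combination (norm := module)
    cubic i j k • (Pi.single (i, j, k) 1 : ι × ι × ι → S) +
      quadratic_left i j k • (Pi.single (j, i, k) 1 : ι × ι × ι → S) -
      quadratic_right i j k • (Pi.single (i, k, j) 1 : ι × ι × ι → S)

end IceMatrix

section HeckeWeights

open OrderDual

variable {ι S : Type*} [LinearOrder ι] [Zero S]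

/-- The weight with which the multiparameter Hecke-type `R`-matrix fixes `eᵢ ⊗ eⱼ`. -/
def heckeStay (z : S) (d : ι → S) (i j : ι) : S :=
  if i = j then d i else if j < i then z else 0

/-- The weight with which the multiparameter Hecke-type `R`-matrix swaps `eᵢ ⊗ eⱼ`. It vanishes on
the diagonal, where `heckeStay` carries the whole eigenvalue. -/
def heckeSwap (s : ι → ι → S) (i j : ι) : S :=
  if i = j then 0 else s i j

variable {z : S} {d : ι → S} {s : ι → ι → S}

lemma heckeStay_self (i : ι) : heckeStay z d i i = d i := if_pos rfl

lemma heckeStay_of_lt {i j : ι} (h : i < j) : heckeStay z d i j = 0 := by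
  simp [heckeStay, h.ne, h.not_gt]

lemma heckeStay_of_gt {i j : ι} (h : j < i) : heckeStay z d i j = z := by
  simp [heckeStay, h.ne', h]

lemma heckeStay_toDual (i j : ι) :
    heckeStay z (d ∘ ofDual) (toDual j) (toDual i) = heckeStay z d i j := by
  rcases lt_trichotomy i j with h | rfl | h
  · rw [heckeStay_of_lt h, heckeStay_of_lt (i := toDual j) (toDual_lt_toDual.2 h)]
  · simp only [heckeStay_self, Function.comp_apply, ofDual_toDual]
  · rw [heckeStay_of_gt h, heckeStay_of_gt (i := toDual j) (toDual_lt_toDual.2 h)]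

lemma heckeSwap_self (i : ι) : heckeSwap s i i = 0 := if_pos rfl

end HeckeWeights

section HeckeRMatrix

open OrderDual

variable {ι S : Type*} [LinearOrder ι]

/-- The multiparameter Hecke-type `R`-matrix: `eᵢ ⊗ eᵢ ↦ d i • eᵢ ⊗ eᵢ`, and for `i ≠ j`
`eᵢ ⊗ eⱼ ↦ s i j • eⱼ ⊗ eᵢ`, with the additional term `z • eᵢ ⊗ eⱼ` if `j < i`. -/
def heckeRMatrix [AddZeroClass S] (z : S) (d : ι → S) (s : ι → ι → S) :
    Matrix (ι × ι) (ι × ι) S :=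
  iceMatrix (heckeStay z d) (heckeSwap s)

variable [CommRing S] {z c : S} {d : ι → S} {s : ι → ι → S}

lemma heckeSwap_mul_heckeSwap_swap (hs : ∀ i j, i ≠ j → s i j * s j i = c) {i j : ι} (h : i ≠ j) :
    heckeSwap s i j * heckeSwap s j i = c := by
  simp [heckeSwap, h, h.symm, hs]

lemma heckeStay_quadratic_left {i j : ι} (h : i ≠ j) (k : ι) :
    heckeStay z d i j * heckeStay z d j k + heckeStay z d j i * heckeStay z d i k =
      heckeStay z d i k * heckeStay z d j k := by
  rcases h.lt_or_gt with hij | hji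
  · rw [heckeStay_of_lt hij, heckeStay_of_gt hij]
    rcases le_or_gt k i with hki | hik
    · rw [heckeStay_of_gt (hki.trans_lt hij)]; ring
    · rw [heckeStay_of_lt hik]; ring
  · rw [heckeStay_of_lt hji, heckeStay_of_gt hji]
    rcases le_or_gt k j with hkj | hjk
    · rw [heckeStay_of_gt (hkj.trans_lt hji)]; ring
    · rw [heckeStay_of_lt hjk]; ring

lemma heckeStay_quadratic_right (i : ι) {j k : ι} (h : j ≠ k) :
    heckeStay z d i j * heckeStay z d j k + heckeStay z d i k * heckeStay z d k j =
      heckeStay z d i j * heckeStay z d i k := by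
  have dual := heckeStay_quadratic_left (z := z) (d := d ∘ ofDual)
    (toDual.injective.ne h.symm) (toDual i)
  simp only [heckeStay_toDual] at dual
  linear_combination dual

lemma heckeStay_sq_mul_comm {i j k : ι} (hij : i ≠ j) (hjk : j ≠ k) :
    heckeStay z d i j ^ 2 * heckeStay z d j k = heckeStay z d i j * heckeStay z d j k ^ 2 := by
  rcases hij.lt_or_gt with hij | hji
  · rw [heckeStay_of_lt hij]; ring
  rcases hjk.lt_or_gt with hjk | hkj
  · rw [heckeStay_of_lt hjk]; ring
  · rw [heckeStay_of_gt hji, heckeStay_of_gt hkj]; ring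

lemma sq_mul_heckeStay_of_ne {a : S} (ha : a ^ 2 = z * a + c) {i j : ι} (h : i ≠ j) :
    a ^ 2 * heckeStay z d i j = a * heckeStay z d i j ^ 2 + c * heckeStay z d i j := by
  rcases h.lt_or_gt with hij | hji
  · rw [heckeStay_of_lt hij]; ring
  · rw [heckeStay_of_gt hji, ha]; ring

lemma heckeStay_cubic (hd : ∀ i, d i ^ 2 = z * d i + c) (hs : ∀ i j, i ≠ j → s i j * s j i = c)
    (i j k : ι) :
    heckeStay z d i j ^ 2 * heckeStay z d j k +
        heckeSwap s i j * heckeSwap s j i * heckeStay z d i k =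
      heckeStay z d i j * heckeStay z d j k ^ 2 +
        heckeSwap s j k * heckeSwap s k j * heckeStay z d i k := by
  rcases eq_or_ne i j with rfl | hij
  · rcases eq_or_ne i k with rfl | hik
    · ring
    · rw [heckeStay_self, heckeSwap_self, heckeSwap_mul_heckeSwap_swap hs hik]
      linear_combination sq_mul_heckeStay_of_ne (hd i) hik
  rcases eq_or_ne j k with rfl | hjk
  · rw [heckeStay_self, heckeSwap_self, heckeSwap_mul_heckeSwap_swap hs hij]
    linear_combination -sq_mul_heckeStay_of_ne (hd j) hij
  · rw [heckeSwap_mul_heckeSwap_swap hs hij, heckeSwap_mul_heckeSwap_swap hs hjk,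
      heckeStay_sq_mul_comm hij hjk]

theorem yang_baxter_general [Fintype ι] (hd : ∀ i, d i ^ 2 = z * d i + c)
    (hs : ∀ i j, i ≠ j → s i j * s j i = c) :
    onFirstTwo (heckeRMatrix z d s) * onLastTwo (heckeRMatrix z d s) *
        onFirstTwo (heckeRMatrix z d s) =
      onLastTwo (heckeRMatrix z d s) * onFirstTwo (heckeRMatrix z d s) *
        onLastTwo (heckeRMatrix z d s) := by
  refine yang_baxter_iceMatrix (heckeStay_cubic hd hs) (fun i j k => ?_) (fun i j k => ?_)
  · rcases eq_or_ne i j with rfl | hij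
    · simp only [heckeSwap_self, zero_mul]
    · rw [heckeStay_quadratic_left hij]
  · rcases eq_or_ne j k with rfl | hjk
    · simp only [heckeSwap_self, zero_mul]
    · rw [heckeStay_quadratic_right i hjk]

end HeckeRMatrix

/-- The eigenvalue of the `U_q(gl(m|n))` `R`-matrix on `eᵢ ⊗ eᵢ`: `q⁻¹` for `i` of parity 0
and `-q` for `i` of parity 1. -/
def superDiag (m : ℕ) {M : ℕ} (i : Fin M) : K :=
  if (i : ℕ) < m then q⁻¹ else -q

lemma superDiag_sq (m : ℕ) {M : ℕ} (i : Fin M) :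
    superDiag m i ^ 2 = (q⁻¹ - q) * superDiag m i + 1 := by
  have hq : q * q⁻¹ = 1 := mul_inv_cancel₀ RatFunc.X_ne_zero
  unfold superDiag
  split_ifs <;> linear_combination hq

lemma sgn_mul_sgn_swap (m : ℕ) {M : ℕ} (i j : Fin M) : sgn m i j * sgn m j i = 1 := by
  simp only [sgn, and_comm (a := m ≤ (j : ℕ))]
  split_ifs <;> norm_num

lemma Rmat_eq_heckeRMatrix (m n : ℕ) :
    Rmat m n = heckeRMatrix (q⁻¹ - q) (superDiag m) (sgn m) := by
  ext ⟨a, b⟩ ⟨i, j⟩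
  rcases lt_trichotomy i j with h | rfl | h
  · simp [Rmat, heckeRMatrix, iceMatrix, heckeStay, heckeSwap, h.ne, h.not_gt]
  · simp [Rmat, heckeRMatrix, iceMatrix, heckeStay, heckeSwap, superDiag]
  · simp [Rmat, heckeRMatrix, iceMatrix, heckeStay, heckeSwap, h.ne', h, add_comm]

lemma R12_eq_onFirstTwo (m n : ℕ) : R12 m n = onFirstTwo (Rmat m n) := by
  ext ⟨a, b, c⟩ ⟨i, j, k⟩
  simp [R12, onFirstTwo, Matrix.one_apply]

lemma R23_eq_onLastTwo (m n : ℕ) : R23 m n = onLastTwo (Rmat m n) := by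
  ext ⟨a, b, c⟩ ⟨i, j, k⟩
  simp [R23, onLastTwo, Matrix.one_apply]

/-- The R-matrix of `U_q(gl(m|n))` satisfies the Yang–Baxter equation on
`V ⊗ V ⊗ V`: `(R ⊗ Id) ∘ (Id ⊗ R) ∘ (R ⊗ Id) = (Id ⊗ R) ∘ (R ⊗ Id) ∘ (Id ⊗ R)`
(matrix multiplication corresponds to composition of the linear maps). -/
theorem yang_baxter (m n : ℕ) :
    R12 m n * R23 m n * R12 m n = R23 m n * R12 m n * R23 m n := by
  rw [R12_eq_onFirstTwo, R23_eq_onLastTwo, Rmat_eq_heckeRMatrix]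
  exact yang_baxter_general (superDiag_sq m) (fun i j _ => sgn_mul_sgn_swap m i j)
end
end

section
/- The R-matrix R is bijective, with inverse R⁻¹ = R + (q − q^{−1})·Id_{V⊗V}; equivalently the skein relation R − R⁻¹ = (q^{−1} − q)·Id_{V⊗V} holds (the image under the Reshetikhin–Turaev functor of the defining skein relation of the quantized oriented Brauer category). -/
set_option synthInstance.maxHeartbeats 400000
set_option maxHeartbeats 1000000

noncomputable section

/-- The identity matrix on `V ⊗ V`. -/
def idVV (m n : ℕ) :
    Matrix (Fin (m + n) × Fin (m + n)) (Fin (m + n) × Fin (m + n)) K := 1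

/-!
In the basis `eᵢ ⊗ eⱼ` the R-matrix is the sum of a diagonal matrix and a weighted flip
`eᵢ ⊗ eⱼ ↦ eⱼ ⊗ eᵢ`. Moving diagonal matrices past the flip computes its square, and the Hecke
relation `R² = 1 + (q⁻¹ - q) R` reduces to scalar identities for the weights: `q⁻¹` and `-q` are the
roots of `x² = 1 + (q⁻¹ - q) x`, and for `i ≠ j` the diagonal entries at `(i, j)` and `(j, i)` are
`0` and `q⁻¹ - q` in some order, while the two flip weights multiply to `1`. The Hecke relation
exhibits `R - (q⁻¹ - q)` as the inverse of `R`.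
-/

theorem mul_sub_smul_one_eq_one {R A : Type*} [CommRing R] [Ring A] [Algebra R A] {a : A} {c : R}
    (ha : a * a = 1 + c • a) : a * (a - c • 1) = 1 := by
  rw [mul_sub, ha, mul_smul_comm, mul_one, add_sub_cancel_right]

section DiagonalAddPermutation

open Matrix

variable {ι R : Type*} [Fintype ι] [DecidableEq ι]

theorem diagonal_mul_permMatrix [Semiring R] (σ : Equiv.Perm ι) (d : ι → R) :
    diagonal d * σ.permMatrix R = σ.permMatrix R * diagonal (d ∘ σ.symm) := by
  rw [PEquiv.mul_toMatrix_toPEquiv, PEquiv.toMatrix_toPEquiv_mul]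
  ext i j
  simp [diagonal_apply, Equiv.eq_symm_apply]

theorem permMatrix_mul_self_of_involutive [Semiring R] {σ : Equiv.Perm ι}
    (hσ : Function.Involutive σ) : σ.permMatrix R * σ.permMatrix R = 1 := by
  have hσσ : σ * σ = 1 := Equiv.ext hσ
  rw [← permMatrix_mul, hσσ, permMatrix_one]

theorem diagonal_add_permMatrix_mul_diagonal_mul_self [Semiring R] {σ : Equiv.Perm ι}
    (hσ : Function.Involutive σ) (d s : ι → R) :
    (diagonal d + σ.permMatrix R * diagonal s) * (diagonal d + σ.permMatrix R * diagonal s) =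
      diagonal (fun i ↦ d i * d i + s (σ i) * s i) +
        σ.permMatrix R * diagonal (fun i ↦ d (σ i) * s i + s i * d i) := by
  have diagonal_mul_perm (e : ι → R) :
      diagonal e * σ.permMatrix R = σ.permMatrix R * diagonal (fun i ↦ e (σ i)) := by
    rw [diagonal_mul_permMatrix, hσ.symm_eq_self_of_involutive, Function.comp_def]
  set P := σ.permMatrix R
  have diagonal_mul_flip :
      diagonal d * (P * diagonal s) = P * diagonal (fun i ↦ d (σ i) * s i) := by
    rw [← mul_assoc, diagonal_mul_perm, mul_assoc, diagonal_mul_diagonal]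
  have flip_mul_diagonal : P * diagonal s * diagonal d = P * diagonal (fun i ↦ s i * d i) := by
    rw [mul_assoc, diagonal_mul_diagonal]
  have flip_mul_flip :
      P * diagonal s * (P * diagonal s) = diagonal (fun i ↦ s (σ i) * s i) := by
    rw [mul_assoc, ← mul_assoc (diagonal s), diagonal_mul_perm, mul_assoc P, ← mul_assoc P P,
      permMatrix_mul_self_of_involutive hσ, one_mul, diagonal_mul_diagonal]
  rw [add_mul, mul_add, mul_add, diagonal_mul_flip, flip_mul_diagonal, flip_mul_flip,
    diagonal_mul_diagonal, ← diagonal_add, ← diagonal_add, mul_add]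
  abel

theorem diagonal_add_permMatrix_mul_diagonal_mul_self_eq_one_add_smul [CommSemiring R]
    {σ : Equiv.Perm ι} (hσ : Function.Involutive σ) {d s : ι → R} {c : R}
    (hdiag : ∀ i, d i * d i + s (σ i) * s i = 1 + c * d i)
    (hperm : ∀ i, d (σ i) * s i + s i * d i = c * s i) :
    (diagonal d + σ.permMatrix R * diagonal s) * (diagonal d + σ.permMatrix R * diagonal s) =
      1 + c • (diagonal d + σ.permMatrix R * diagonal s) := by
  have diagonal_one_add : diagonal (fun i ↦ 1 + c * d i) = 1 + c • diagonal d := by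
    rw [← diagonal_add, diagonal_one, ← diagonal_smul]
    rfl
  have diagonal_mul_left : diagonal (fun i ↦ c * s i) = c • diagonal s := diagonal_smul c s
  simp only [diagonal_add_permMatrix_mul_diagonal_mul_self hσ, hdiag, hperm, diagonal_one_add,
    diagonal_mul_left, mul_smul_comm, smul_add, add_assoc]

end DiagonalAddPermutation

theorem q_ne_zero : q ≠ 0 := RatFunc.X_ne_zero

theorem sgn_swap_mul_sgn (m : ℕ) {M : ℕ} (i j : Fin M) : sgn m j i * sgn m i j = 1 := by
  simp only [sgn, and_comm (a := m ≤ (j : ℕ))]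
  split_ifs <;> norm_num

namespace Rmat

/-- The coefficient of `eᵢ ⊗ eⱼ` in `R(eᵢ ⊗ eⱼ)`, where `r = (i, j)`. -/
def diagCoeff (m : ℕ) {M : ℕ} (r : Fin M × Fin M) : K :=
  if r.1 = r.2 then (if (r.1 : ℕ) < m then q⁻¹ else -q)
  else if r.2 < r.1 then q⁻¹ - q else 0

/-- The coefficient of `eⱼ ⊗ eᵢ` in `R(eᵢ ⊗ eⱼ)` for `r = (i, j)` with `i ≠ j`. It is `0` for
`i = j`, where the whole coefficient is accounted for by `diagCoeff`. -/
def swapCoeff (m : ℕ) {M : ℕ} (r : Fin M × Fin M) : K :=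
  if r.1 = r.2 then 0 else sgn m r.1 r.2

theorem eq_diagonal_add_permMatrix_mul_diagonal (m n : ℕ) :
    Rmat m n = Matrix.diagonal (diagCoeff m) +
      Equiv.Perm.permMatrix K (Equiv.prodComm _ _) * Matrix.diagonal (swapCoeff m) := by
  ext ⟨a, b⟩ ⟨i, j⟩
  rw [Matrix.add_apply, PEquiv.toMatrix_toPEquiv_mul]
  simp only [Rmat, diagCoeff, swapCoeff, Matrix.submatrix_apply, Matrix.diagonal_apply,
    Equiv.prodComm_apply, Prod.swap_prod_mk, id_eq, Prod.mk.injEq]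
  grind

variable (m : ℕ) {M : ℕ}

theorem diagCoeff_self_mul_self (i : Fin M) :
    diagCoeff m (i, i) * diagCoeff m (i, i) = 1 + (q⁻¹ - q) * diagCoeff m (i, i) := by
  have hq : q * q⁻¹ = 1 := mul_inv_cancel₀ q_ne_zero
  simp only [diagCoeff, if_true]
  split_ifs <;> linear_combination hq

theorem diagCoeff_mul_self_of_ne {i j : Fin M} (h : i ≠ j) :
    diagCoeff m (i, j) * diagCoeff m (i, j) = (q⁻¹ - q) * diagCoeff m (i, j) := by
  simp only [diagCoeff, if_neg h]
  split_ifs <;> simp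

theorem diagCoeff_swap_add_of_ne {i j : Fin M} (h : i ≠ j) :
    diagCoeff m (j, i) + diagCoeff m (i, j) = q⁻¹ - q := by
  rcases h.lt_or_gt with hij | hji
  · simp [diagCoeff, hij, hij.ne, hij.ne', hij.not_gt]
  · simp [diagCoeff, hji, hji.ne, hji.ne', hji.not_gt]

theorem diagCoeff_mul_self_add_swapCoeff_mul (r : Fin M × Fin M) :
    diagCoeff m r * diagCoeff m r + swapCoeff m r.swap * swapCoeff m r =
      1 + (q⁻¹ - q) * diagCoeff m r := by
  obtain ⟨i, j⟩ := r
  rcases eq_or_ne i j with rfl | h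
  · simp [swapCoeff, diagCoeff_self_mul_self]
  · simp only [swapCoeff, Prod.swap_prod_mk, if_neg h, if_neg h.symm, sgn_swap_mul_sgn,
      diagCoeff_mul_self_of_ne m h, add_comm]

theorem diagCoeff_swap_mul_swapCoeff_add (r : Fin M × Fin M) :
    diagCoeff m r.swap * swapCoeff m r + swapCoeff m r * diagCoeff m r =
      (q⁻¹ - q) * swapCoeff m r := by
  obtain ⟨i, j⟩ := r
  rcases eq_or_ne i j with rfl | h
  · simp [swapCoeff]
  · rw [mul_comm (swapCoeff m _), ← add_mul, Prod.swap_prod_mk, diagCoeff_swap_add_of_ne m h]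

theorem mul_self (m n : ℕ) : Rmat m n * Rmat m n = 1 + (q⁻¹ - q) • Rmat m n := by
  rw [eq_diagonal_add_permMatrix_mul_diagonal]
  exact diagonal_add_permMatrix_mul_diagonal_mul_self_eq_one_add_smul
    (σ := Equiv.prodComm _ _) Prod.swap_swap (diagCoeff_mul_self_add_swapCoeff_mul m)
    (diagCoeff_swap_mul_swapCoeff_add m)

end Rmat

/-- The R-matrix is bijective, with inverse `R⁻¹ = R + (q - q⁻¹)·Id`;
equivalently the skein relation `R - R⁻¹ = (q⁻¹ - q)·Id` holds (the image under
the Reshetikhin–Turaev functor of the defining skein relation of the quantized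
oriented Brauer category). -/
theorem skein_relation (m n : ℕ) :
    Function.Bijective (Matrix.toLin' (Rmat m n)) ∧
    (Rmat m n)⁻¹ = Rmat m n + (q - q⁻¹) • idVV m n ∧
    Rmat m n - (Rmat m n)⁻¹ = (q⁻¹ - q) • idVV m n := by
  have mul_inv : Rmat m n * (Rmat m n - (q⁻¹ - q) • idVV m n) = 1 :=
    mul_sub_smul_one_eq_one (Rmat.mul_self m n)
  have inv_eq : (Rmat m n)⁻¹ = Rmat m n - (q⁻¹ - q) • idVV m n := Matrix.inv_eq_right_inv mul_inv
  refine ⟨?_, ?_, ?_⟩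
  · exact (Module.End.isUnit_iff _).mp ((IsUnit.of_mul_eq_one _ mul_inv).map Matrix.toLinAlgEquiv')
  · rw [inv_eq, ← neg_sub q⁻¹ q, neg_smul, sub_eq_add_neg]
  · rw [inv_eq, sub_sub_cancel]
end
end

section
/- The R-matrix is an intertwiner for the quantum group action on V ⊗ V: for every i with 1 ≤ i ≤ m − 1, R ∘ Δ(E_i) = Δ(E_i) ∘ R and R ∘ Δ(F_i) = Δ(F_i) ∘ R, and for every j with 1 ≤ j ≤ m, R ∘ Δ(L_j) = Δ(L_j) ∘ R. (This expresses that the crossing assignment of the Reshetikhin–Turaev functor lands in U_q(gl_m)-module endomorphisms of V ⊗ V.) -/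
set_option synthInstance.maxHeartbeats 400000
set_option maxHeartbeats 1000000

noncomputable section

/-- The elementary matrix `E_i` (0-based: single `1` in position `(i, i+1)`). -/
def Emat (M : ℕ) (i : ℕ) : Matrix (Fin M) (Fin M) K :=
  fun a b => if (a : ℕ) = i ∧ (b : ℕ) = i + 1 then 1 else 0

/-- The elementary matrix `F_i` (0-based: single `1` in position `(i+1, i)`). -/
def Fmat (M : ℕ) (i : ℕ) : Matrix (Fin M) (Fin M) K :=
  fun a b => if (a : ℕ) = i + 1 ∧ (b : ℕ) = i then 1 else 0

/-- The diagonal matrix `L_j` with entry `q` in (0-based) position `j` and `1`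
elsewhere. -/
def Lmat (M : ℕ) (j : ℕ) : Matrix (Fin M) (Fin M) K :=
  Matrix.diagonal (fun t => if (t : ℕ) = j then q else 1)

/-- The inverse `L_j⁻¹` of `Lmat`. -/
def LmatInv (M : ℕ) (j : ℕ) : Matrix (Fin M) (Fin M) K :=
  Matrix.diagonal (fun t => if (t : ℕ) = j then q⁻¹ else 1)

/-- The diagonal matrix `K_i = L_i L_{i+1}⁻¹` with entries `q` at position `i`
and `q⁻¹` at position `i+1` (0-based). -/
def Kmat (M : ℕ) (i : ℕ) : Matrix (Fin M) (Fin M) K :=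
  Matrix.diagonal
    (fun t => if (t : ℕ) = i then q else if (t : ℕ) = i + 1 then q⁻¹ else 1)

/-- The inverse `K_i⁻¹` of `Kmat`. -/
def KmatInv (M : ℕ) (i : ℕ) : Matrix (Fin M) (Fin M) K :=
  Matrix.diagonal
    (fun t => if (t : ℕ) = i then q⁻¹ else if (t : ℕ) = i + 1 then q else 1)

/-- The Kronecker product of two `M × M` matrices, acting on `V ⊗ V` with
`V = K^M`: `(A ⊗ B)(eᵢ ⊗ eⱼ) = (A eᵢ) ⊗ (B eⱼ)`. -/
def kron2 {M : ℕ} (A B : Matrix (Fin M) (Fin M) K) :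
    Matrix (Fin M × Fin M) (Fin M × Fin M) K :=
  fun p r => A p.1 r.1 * B p.2 r.2

/-- The matrix (in the standard basis of `V ⊗ V`, `V = K^m`, indices 0-based) of
the `n = 0` R-matrix: `R(eᵢ ⊗ eᵢ) = q⁻¹ eᵢ ⊗ eᵢ`, `R(eᵢ ⊗ eⱼ) = eⱼ ⊗ eᵢ` for
`i < j`, and `R(eᵢ ⊗ eⱼ) = eⱼ ⊗ eᵢ + (q⁻¹ - q) eᵢ ⊗ eⱼ` for `i > j`. -/
def R0mat (m : ℕ) : Matrix (Fin m × Fin m) (Fin m × Fin m) K :=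
  fun p r =>
    if r.1 = r.2 then (if p = r then q⁻¹ else 0)
    else (if p.1 = r.2 ∧ p.2 = r.1 then 1 else 0)
      + (if r.2 < r.1 ∧ p = r then q⁻¹ - q else 0)

/-- The coproduct operator `Δ(E_i) = E_i ⊗ K_i⁻¹ + 1 ⊗ E_i` on `V ⊗ V`. -/
def DeltaE2 (m i : ℕ) : Matrix (Fin m × Fin m) (Fin m × Fin m) K :=
  kron2 (Emat m i) (KmatInv m i) + kron2 1 (Emat m i)

/-- The coproduct operator `Δ(F_i) = F_i ⊗ 1 + K_i ⊗ F_i` on `V ⊗ V`. -/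
def DeltaF2 (m i : ℕ) : Matrix (Fin m × Fin m) (Fin m × Fin m) K :=
  kron2 (Fmat m i) 1 + kron2 (Kmat m i) (Fmat m i)

/-- The coproduct operator `Δ(L_j) = L_j ⊗ L_j` on `V ⊗ V`. -/
def DeltaL2 (m j : ℕ) : Matrix (Fin m × Fin m) (Fin m × Fin m) K :=
  kron2 (Lmat m j) (Lmat m j)

/-!
In the tensor basis `e_a ⊗ e_b`, the relation `R² = 1 + (q⁻¹ - q) R` determines `R` on
`e_b ⊗ e_a = R (e_a ⊗ e_b)` for `a < b`, so an operator commutes with `R` as soon as it does so on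
the vectors `e_a ⊗ e_b` with `a ≤ b`. This leaves few cases for `Δ(E)`; they use that the two
indices of `E` are adjacent, so that no third index separates them. The case of `Δ(F)` follows by
transposition: `R` is symmetric and commutes with `Δ(K) = K ⊗ K`, and `Δ(E)ᵀ Δ(K) = q Δ(F)`.
-/

open scoped Kronecker Matrix

section General

variable {ι k : Type*} [CommRing k]

local notation "e[" a "," b "]" => (Pi.single (a, b) 1 : ι × ι → k)

section Coproduct

variable [DecidableEq ι]

/-- The diagonal entries of `K = L_i L_j⁻¹`, for distinct `i` and `j`. -/
def kWeight (q : kˣ) (i j : ι) : ι → kˣ :=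
  fun t ↦ if t = i then q else if t = j then q⁻¹ else 1

/-- `Δ(E) = E ⊗ K⁻¹ + 1 ⊗ E` for the root vector `E = single i j 1`. -/
def coproductE (q : kˣ) (i j : ι) : Matrix (ι × ι) (ι × ι) k :=
  Matrix.single i j 1 ⊗ₖ Matrix.diagonal (fun t ↦ (↑(kWeight q i j t)⁻¹ : k)) +
    1 ⊗ₖ Matrix.single i j 1

/-- `Δ(F) = F ⊗ 1 + K ⊗ F` for the root vector `F = single j i 1`. -/
def coproductF (q : kˣ) (i j : ι) : Matrix (ι × ι) (ι × ι) k :=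
  Matrix.single j i 1 ⊗ₖ 1 + Matrix.diagonal (fun t ↦ (kWeight q i j t : k)) ⊗ₖ Matrix.single j i 1

/-- `Δ(D) = D ⊗ D` for the grouplike diagonal matrix `D` with entries `d`. -/
def coproductDiagonal (d : ι → k) : Matrix (ι × ι) (ι × ι) k :=
  Matrix.diagonal d ⊗ₖ Matrix.diagonal d

variable (q : kˣ) {i j : ι}

theorem kWeight_left : kWeight q i j i = q :=
  if_pos rfl

theorem kWeight_right (hij : i ≠ j) : kWeight q i j j = q⁻¹ := by
  simp [kWeight, hij.symm]

theorem kWeight_of_ne {t : ι} (hi : t ≠ i) (hj : t ≠ j) : kWeight q i j t = 1 := by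
  simp [kWeight, hi, hj]

variable [Fintype ι]

theorem coproductE_mulVec_single (i j c d : ι) :
    coproductE q i j *ᵥ e[c,d] =
      (if c = j then (↑(kWeight q i j d)⁻¹ : k) • e[i,d] else 0) +
        if d = j then e[c,i] else 0 := by
  ext ⟨a, b⟩
  rw [Matrix.mulVec_single_one]
  simp only [coproductE, Matrix.col_apply, Matrix.add_apply, Matrix.kroneckerMap_apply,
    Matrix.single_apply, Matrix.diagonal_apply, Matrix.one_apply, Pi.add_apply, ite_apply,
    Pi.smul_apply, Pi.zero_apply, Pi.single_apply, Prod.mk.injEq, smul_eq_mul]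
  grind

theorem coproductE_mulVec_single_of_ne {c d : ι} (hc : c ≠ j) (hd : d ≠ j) :
    coproductE q i j *ᵥ e[c,d] = 0 := by
  rw [coproductE_mulVec_single, if_neg hc, if_neg hd, add_zero]

theorem coproductE_mulVec_single_left {d : ι} (hd : d ≠ j) :
    coproductE q i j *ᵥ e[j,d] = (↑(kWeight q i j d)⁻¹ : k) • e[i,d] := by
  rw [coproductE_mulVec_single, if_pos rfl, if_neg hd, add_zero]

theorem coproductE_mulVec_single_right {c : ι} (hc : c ≠ j) :
    coproductE q i j *ᵥ e[c,j] = e[c,i] := by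
  rw [coproductE_mulVec_single, if_neg hc, if_pos rfl, zero_add]

theorem coproductE_mulVec_single_self (hij : i ≠ j) :
    coproductE q i j *ᵥ e[j,j] = (q : k) • e[i,j] + e[j,i] := by
  rw [coproductE_mulVec_single, if_pos rfl, if_pos rfl, kWeight_right q hij, inv_inv]

theorem coproductE_transpose_mul_coproductDiagonal (i j : ι) :
    (coproductE q i j)ᵀ * coproductDiagonal (fun t ↦ (kWeight q i j t : k)) =
      q • coproductF q i j := by
  have hFK : Matrix.single j i (1 : k) * Matrix.diagonal (fun t ↦ (kWeight q i j t : k)) =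
      q • Matrix.single j i 1 := by
    ext a b
    by_cases hb : i = b
    · subst hb
      simp [kWeight_left, Matrix.single_apply, Units.smul_def]
    · simp [hb]
  have hKK : Matrix.diagonal (fun t ↦ (↑(kWeight q i j t)⁻¹ : k)) *
      Matrix.diagonal (fun t ↦ (kWeight q i j t : k)) = 1 := by
    simp
  simp only [coproductE, coproductDiagonal, coproductF, Matrix.transpose_add,
    ← Matrix.kroneckerMap_transpose, Matrix.transpose_single, Matrix.diagonal_transpose,
    Matrix.transpose_one, add_mul, ← Matrix.mul_kronecker_mul, hFK, hKK, one_mul,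
    Matrix.smul_kronecker, Matrix.kronecker_smul, smul_add]

end Coproduct

section RMatrix

variable [LinearOrder ι]

/-- The `n = 0` R-matrix over an arbitrary commutative ring with a unit `q`, on `V ⊗ V` for `V` free
on a linearly ordered basis; the column of `(a, b)` is the image of `e_a ⊗ e_b`. -/
def rMatrix (q : kˣ) : Matrix (ι × ι) (ι × ι) k :=
  Matrix.of fun p r ↦
    if r.1 = r.2 then (if p = r then (↑q⁻¹ : k) else 0)
    else (if p = r.swap then 1 else 0) + (if r.2 < r.1 ∧ p = r then (↑q⁻¹ - ↑q : k) else 0)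

variable (q : kˣ)

theorem rMatrix_isSymm : (rMatrix q : Matrix (ι × ι) (ι × ι) k).IsSymm := by
  ext ⟨a, b⟩ ⟨c, d⟩
  simp only [rMatrix, Matrix.transpose_apply, Matrix.of_apply, Prod.swap_prod_mk, Prod.mk.injEq]
  grind

variable [Fintype ι]

theorem commute_rMatrix_coproductDiagonal (d : ι → k) :
    Commute (rMatrix q) (coproductDiagonal d) := by
  ext ⟨a, b⟩ ⟨a', b'⟩
  simp only [coproductDiagonal, Matrix.diagonal_kronecker_diagonal, Matrix.mul_diagonal,
    Matrix.diagonal_mul, rMatrix, Matrix.of_apply, Prod.swap_prod_mk, Prod.mk.injEq]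
  grind

theorem rMatrix_mulVec_single_self (a : ι) : rMatrix q *ᵥ e[a,a] = (↑q⁻¹ : k) • e[a,a] := by
  ext ⟨c, d⟩
  simp [rMatrix, Pi.single_apply]

theorem rMatrix_mulVec_single_of_lt {a b : ι} (hab : a < b) :
    rMatrix q *ᵥ e[a,b] = e[b,a] := by
  ext ⟨c, d⟩
  simp [rMatrix, Pi.single_apply, hab.ne, hab.not_gt]

theorem rMatrix_mulVec_single_of_gt {a b : ι} (hab : b < a) :
    rMatrix q *ᵥ e[a,b] = e[b,a] + (↑q⁻¹ - ↑q : k) • e[a,b] := by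
  ext ⟨c, d⟩
  simp [rMatrix, Pi.single_apply, hab.ne', hab]

theorem rMatrix_mul_self :
    (rMatrix q : Matrix (ι × ι) (ι × ι) k) * rMatrix q = 1 + (↑q⁻¹ - ↑q : k) • rMatrix q := by
  refine Matrix.ext_of_mulVec_single ?_
  rintro ⟨a, b⟩
  rw [← Matrix.mulVec_mulVec, Matrix.add_mulVec, Matrix.one_mulVec, Matrix.smul_mulVec]
  rcases lt_trichotomy a b with hab | rfl | hab
  · rw [rMatrix_mulVec_single_of_lt q hab, rMatrix_mulVec_single_of_gt q hab]
  · rw [rMatrix_mulVec_single_self, Matrix.mulVec_smul, rMatrix_mulVec_single_self]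
    linear_combination (norm := module) q.mul_inv • e[a,a]
  · rw [rMatrix_mulVec_single_of_gt q hab, Matrix.mulVec_add, Matrix.mulVec_smul,
      rMatrix_mulVec_single_of_lt q hab, rMatrix_mulVec_single_of_gt q hab]

theorem commute_rMatrix_of_forall_le {A : Matrix (ι × ι) (ι × ι) k}
    (hA : ∀ a b, a ≤ b → rMatrix q *ᵥ A *ᵥ e[a,b] = A *ᵥ rMatrix q *ᵥ e[a,b]) :
    Commute (rMatrix q) A := by
  refine Matrix.ext_of_mulVec_single ?_
  rintro ⟨a, b⟩
  simp only [← Matrix.mulVec_mulVec]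
  rcases le_or_gt a b with hab | hba
  · exact hA a b hab
  have hR : e[a,b] = rMatrix q *ᵥ e[b,a] := (rMatrix_mulVec_single_of_lt q hba).symm
  have hRA : rMatrix q *ᵥ A *ᵥ e[b,a] = A *ᵥ e[a,b] := by
    rw [hA b a hba.le, hR]
  calc rMatrix q *ᵥ A *ᵥ e[a,b]
      = (rMatrix q * rMatrix q) *ᵥ A *ᵥ e[b,a] := by
        rw [← hRA, Matrix.mulVec_mulVec]
    _ = A *ᵥ e[b,a] + (↑q⁻¹ - ↑q : k) • A *ᵥ e[a,b] := by
        rw [rMatrix_mul_self, Matrix.add_mulVec, Matrix.one_mulVec, Matrix.smul_mulVec, hRA]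
    _ = A *ᵥ rMatrix q *ᵥ e[a,b] := by
        rw [rMatrix_mulVec_single_of_gt q hba, Matrix.mulVec_add, Matrix.mulVec_smul]

theorem commute_rMatrix_coproductE {i j : ι} (hij : i ⋖ j) :
    Commute (rMatrix q) (coproductE q i j) := by
  refine commute_rMatrix_of_forall_le q fun a b hab ↦ ?_
  rcases hab.eq_or_lt with rfl | hab
  · rw [rMatrix_mulVec_single_self, Matrix.mulVec_smul]
    rcases eq_or_ne a j with rfl | haj
    · rw [coproductE_mulVec_single_self q hij.ne, Matrix.mulVec_add, Matrix.mulVec_smul,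
        rMatrix_mulVec_single_of_lt q hij.lt, rMatrix_mulVec_single_of_gt q hij.lt]
      linear_combination (norm := module) -q.mul_inv • e[i,a]
    · rw [coproductE_mulVec_single_of_ne q haj haj, Matrix.mulVec_zero, smul_zero]
  · rw [rMatrix_mulVec_single_of_lt q hab]
    rcases eq_or_ne b j with rfl | hbj
    · rw [coproductE_mulVec_single_right q hab.ne, coproductE_mulVec_single_left q hab.ne]
      rcases (hij.le_of_lt hab).eq_or_lt with rfl | hai
      · rw [rMatrix_mulVec_single_self, kWeight_left]
      · rw [rMatrix_mulVec_single_of_lt q hai, kWeight_of_ne q hai.ne hab.ne, inv_one,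
          Units.val_one, one_smul]
    rcases eq_or_ne a j with rfl | haj
    · have hib : i < b := hij.lt.trans hab
      rw [coproductE_mulVec_single_left q hbj, coproductE_mulVec_single_right q hbj,
        kWeight_of_ne q hib.ne' hbj, inv_one, Units.val_one, one_smul,
        rMatrix_mulVec_single_of_lt q hib]
    · rw [coproductE_mulVec_single_of_ne q haj hbj, coproductE_mulVec_single_of_ne q hbj haj,
        Matrix.mulVec_zero]

theorem commute_rMatrix_coproductF {i j : ι} (hij : i ⋖ j) :
    Commute (rMatrix q) (coproductF q i j) := by
  have hET : Commute (rMatrix q) (coproductE q i j)ᵀ := by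
    have h := congrArg Matrix.transpose (commute_rMatrix_coproductE q hij).eq
    rw [Matrix.transpose_mul, Matrix.transpose_mul, (rMatrix_isSymm q).eq] at h
    exact h.symm
  rw [← Commute.smul_right_iff (g := q), ← coproductE_transpose_mul_coproductDiagonal q i j]
  exact hET.mul_right (commute_rMatrix_coproductDiagonal q _)

end RMatrix

end General

theorem R_matrix_intertwiner_general {ι k : Type*} [LinearOrder ι] [Fintype ι] [CommRing k]
    (q : kˣ) :
    (∀ i j : ι, i ⋖ j →
      rMatrix q * coproductE q i j = coproductE q i j * rMatrix q ∧
      rMatrix q * coproductF q i j = coproductF q i j * rMatrix q) ∧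
    (∀ d : ι → k,
      rMatrix q * coproductDiagonal d = coproductDiagonal d * rMatrix q) :=
  ⟨fun _ _ hij ↦ ⟨commute_rMatrix_coproductE q hij, commute_rMatrix_coproductF q hij⟩,
    commute_rMatrix_coproductDiagonal q⟩

section Specialization

/-- The variable `q` of `ℚ(q)` as a unit. -/
def qUnit : Kˣ :=
  .mk0 q RatFunc.X_ne_zero

variable {m : ℕ}

theorem val_qUnit : (qUnit : K) = q :=
  rfl

theorem kron2_eq_kronecker (A B : Matrix (Fin m) (Fin m) K) : kron2 A B = A ⊗ₖ B :=
  rfl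

theorem R0mat_eq_rMatrix : R0mat m = rMatrix qUnit := by
  ext ⟨a, b⟩ ⟨c, d⟩
  simp [R0mat, rMatrix, val_qUnit]

theorem Emat_eq_single {i j : Fin m} (hij : i ⋖ j) : Emat m i = .single i j 1 := by
  have hj : (i : ℕ) + 1 = j := by simpa using hij
  ext a b
  simp [Emat, Matrix.single_apply, Fin.ext_iff, hj, eq_comm]

theorem Fmat_eq_single {i j : Fin m} (hij : i ⋖ j) : Fmat m i = .single j i 1 := by
  have hj : (i : ℕ) + 1 = j := by simpa using hij
  ext a b
  simp [Fmat, Matrix.single_apply, Fin.ext_iff, hj, eq_comm]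

theorem Lmat_eq_diagonal (j : Fin m) : Lmat m j = .diagonal (Pi.mulSingle j q) := by
  simp [Lmat, Pi.mulSingle_apply, Fin.ext_iff]

theorem Kmat_eq_diagonal {i j : Fin m} (hij : i ⋖ j) :
    Kmat m i = .diagonal fun t ↦ (kWeight qUnit i j t : K) := by
  have hj : (i : ℕ) + 1 = j := by simpa using hij
  simp [Kmat, kWeight, apply_ite Units.val, Fin.ext_iff, hj, val_qUnit]

theorem KmatInv_eq_diagonal {i j : Fin m} (hij : i ⋖ j) :
    KmatInv m i = .diagonal fun t ↦ (↑(kWeight qUnit i j t)⁻¹ : K) := by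
  have hj : (i : ℕ) + 1 = j := by simpa using hij
  simp [KmatInv, kWeight, apply_ite Units.val, apply_ite Inv.inv, Fin.ext_iff, hj, val_qUnit]

theorem DeltaE2_eq_coproductE {i j : Fin m} (hij : i ⋖ j) :
    DeltaE2 m i = coproductE qUnit i j := by
  simp only [DeltaE2, kron2_eq_kronecker, Emat_eq_single hij, KmatInv_eq_diagonal hij, coproductE]

theorem DeltaF2_eq_coproductF {i j : Fin m} (hij : i ⋖ j) :
    DeltaF2 m i = coproductF qUnit i j := by
  simp only [DeltaF2, kron2_eq_kronecker, Fmat_eq_single hij, Kmat_eq_diagonal hij, coproductF]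

theorem DeltaL2_eq_coproductDiagonal (j : Fin m) :
    DeltaL2 m j = coproductDiagonal (Pi.mulSingle j q) := by
  simp only [DeltaL2, kron2_eq_kronecker, Lmat_eq_diagonal, coproductDiagonal]

end Specialization

/-- The R-matrix is an intertwiner for the quantum group action on `V ⊗ V`: it
commutes with `Δ(E_i)`, `Δ(F_i)` for `1 ≤ i ≤ m-1` (here 0-based: `i + 1 < m`)
and with `Δ(L_j)` for `1 ≤ j ≤ m` (here 0-based: `j < m`). Matrix products
correspond to compositions of the linear maps. -/
theorem R_matrix_intertwiner (m : ℕ) :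
    (∀ i : ℕ, i + 1 < m →
      R0mat m * DeltaE2 m i = DeltaE2 m i * R0mat m ∧
      R0mat m * DeltaF2 m i = DeltaF2 m i * R0mat m) ∧
    (∀ j : ℕ, j < m →
      R0mat m * DeltaL2 m j = DeltaL2 m j * R0mat m) := by
  obtain ⟨hEF, hL⟩ := R_matrix_intertwiner_general (ι := Fin m) qUnit
  refine ⟨fun i hi ↦ ?_, fun j hj ↦ ?_⟩
  · have hcov : (⟨i, by lia⟩ : Fin m) ⋖ ⟨i + 1, hi⟩ := by simp
    rw [R0mat_eq_rMatrix, DeltaE2_eq_coproductE hcov, DeltaF2_eq_coproductF hcov]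
    exact hEF _ _ hcov
  · rw [R0mat_eq_rMatrix, DeltaL2_eq_coproductDiagonal ⟨j, hj⟩]
    exact hL _
end
end

section
/- For every N ≥ 2, the operators R_i := Id_V^{⊗(i−1)} ⊗ R ⊗ Id_V^{⊗(N−i−1)} on V^{⊗N} (1 ≤ i ≤ N−1) define an action of the Hecke algebra ℋ_N: they satisfy the braid relation R_i R_{i+1} R_i = R_{i+1} R_i R_{i+1} for 1 ≤ i ≤ N−2, the far commutation R_i R_j = R_j R_i for |i − j| ≥ 2, and the quadratic relation (R_i − q^{−1}·Id)(R_i + q·Id) = 0 for all i. -/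
set_option synthInstance.maxHeartbeats 400000
set_option maxHeartbeats 1000000

noncomputable section

/-- The Hecke operator `R_i = Id^{⊗i} ⊗ R ⊗ Id^{⊗(N-i-2)}` on `V^{⊗N}`
(0-based: it acts by `R` on tensor factors `i` and `i+1` and by the identity
elsewhere). -/
def Rop (m n N : ℕ) (i : ℕ) (h : i + 1 < N) :
    Matrix (Fin N → Fin (m + n)) (Fin N → Fin (m + n)) K :=
  fun f g =>
    Rmat m n (f ⟨i, Nat.lt_of_succ_lt h⟩, f ⟨i + 1, h⟩)
        (g ⟨i, Nat.lt_of_succ_lt h⟩, g ⟨i + 1, h⟩) *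
      ∏ t : Fin N, (if (t : ℕ) = i ∨ (t : ℕ) = i + 1 then 1
        else if f t = g t then 1 else 0)

/-!
In the standard basis, `R` sends `e_x ⊗ e_y` to `a x y • e_y ⊗ e_x + b x y • e_x ⊗ e_y`, so each
`R_i` is a combination of a transposition of tensor factors and the identity, with coefficients
depending only on the two indices involved. Acting on row vectors, both sides of every Hecke
relation expand over permutations of the factors. Since transpositions themselves satisfy the
braid and commutation relations, comparing coefficients leaves identities between the weights `a`
and `b`. These hold because `b x y` depends only on the relative order of `x` and `y` when `x ≠ y`,
while `a x y * a y x + (b x y - q⁻¹) * (b x y + q)` vanishes identically.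
-/

lemma eq_iff_eq_at_two_points {S X : Type*} {f g : S → X} {s t : S} :
    f = g ↔ (f s = g s ∧ f t = g t) ∧ ∀ r, r ≠ s → r ≠ t → f r = g r := by
  refine ⟨by rintro rfl; simp, fun ⟨⟨hs, ht⟩, hrest⟩ => funext fun r => ?_⟩
  rcases eq_or_ne r s with rfl | hrs
  · exact hs
  rcases eq_or_ne r t with rfl | hrt
  · exact ht
  · exact hrest r hrs hrt

section Swap

variable {S : Type*} [DecidableEq S]

lemma swap_braid {s t u : S} (hst : s ≠ t) (htu : t ≠ u) (hsu : s ≠ u) :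
    Equiv.swap s t * Equiv.swap t u * Equiv.swap s t =
      Equiv.swap t u * Equiv.swap s t * Equiv.swap t u := by
  rw [Equiv.swap_mul_swap_mul_swap hst hsu, Equiv.swap_comm s t, Equiv.swap_comm t u,
    Equiv.swap_mul_swap_mul_swap htu.symm hsu.symm, Equiv.swap_comm]

lemma commute_swap_swap {s t u w : S} (hsu : s ≠ u) (hsw : s ≠ w) (htu : t ≠ u) (htw : t ≠ w) :
    Commute (Equiv.swap s t) (Equiv.swap u w) := by
  have h := Equiv.swap_apply_apply (Equiv.swap s t) u w
  rw [Equiv.swap_apply_of_ne_of_ne hsu.symm htu.symm,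
    Equiv.swap_apply_of_ne_of_ne hsw.symm htw.symm] at h
  exact (eq_mul_inv_iff_mul_eq.mp h).symm

lemma eq_comp_swap_iff {X : Type*} {f g : S → X} {s t : S} :
    f = g ∘ Equiv.swap s t ↔ (f s = g t ∧ f t = g s) ∧ ∀ r, r ≠ s → r ≠ t → f r = g r := by
  rw [eq_iff_eq_at_two_points (s := s) (t := t)]
  simp +contextual [Equiv.swap_apply_of_ne_of_ne]

end Swap

/-- Weights of Perk–Schultz type, with eigenvalues `α` and `β`: the coefficients `a` of the flipped
vector and `b` of the unflipped vector in `e_x ⊗ e_y ↦ a x y • e_y ⊗ e_x + b x y • e_x ⊗ e_y`.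
On the diagonal the two vectors coincide, and the convention is that `b` carries the whole
coefficient. -/
structure IsHeckeWeights {A ι : Type*} [CommRing A] [LinearOrder ι] (α β : A)
    (a b : ι → ι → A) : Prop where
  flip_self (x : ι) : a x x = 0
  flip_mul_flip {x y : ι} (h : x ≠ y) : a x y * a y x = -(α * β)
  stay_self (x : ι) : (b x x - α) * (b x x - β) = 0
  stay_of_lt {x y : ι} (h : x < y) : b x y = 0
  stay_of_gt {x y : ι} (h : y < x) : b x y = α + β

namespace IsHeckeWeights

variable {A ι : Type*} [CommRing A] [LinearOrder ι] {α β : A} {a b : ι → ι → A}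

lemma flip_mul_flip_add (hab : IsHeckeWeights α β a b) (x y : ι) :
    a x y * a y x + (b x y - α) * (b x y - β) = 0 := by
  rcases lt_trichotomy x y with h | rfl | h
  · rw [hab.flip_mul_flip h.ne, hab.stay_of_lt h]; ring
  · rw [hab.flip_self, hab.stay_self]; ring
  · rw [hab.flip_mul_flip h.ne', hab.stay_of_gt h]; ring

lemma stay_add_stay (hab : IsHeckeWeights α β a b) {x y : ι} (h : x ≠ y) :
    b x y + b y x = α + β := by
  rcases h.lt_or_gt with h | h <;> rw [hab.stay_of_lt h, hab.stay_of_gt h] <;> ring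

lemma stay_mul_stay_swap (hab : IsHeckeWeights α β a b) {x y : ι} (h : x ≠ y) :
    b x y * b y x = 0 := by
  rcases h.lt_or_gt with h | h <;> rw [hab.stay_of_lt h] <;> ring

lemma stay_mul_self (hab : IsHeckeWeights α β a b) {x y : ι} (h : x ≠ y) :
    b x y * b x y = (α + β) * b x y := by
  linear_combination b x y * hab.stay_add_stay h - hab.stay_mul_stay_swap h

lemma flip_mul_stay_add_stay (hab : IsHeckeWeights α β a b) (x y : ι) :
    a x y * (b x y + b y x) = a x y * (α + β) := by
  rcases eq_or_ne x y with rfl | h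
  · rw [hab.flip_self]; ring
  · rw [hab.stay_add_stay h]

lemma stay_mul_stay_of_lt_left (hab : IsHeckeWeights α β a b) {x y : ι} (h : x < y) (z : ι) :
    b x z * b y z = b x z * (α + β) := by
  rcases lt_or_ge x z with hxz | hzx
  · rw [hab.stay_of_lt hxz]; ring
  · rw [hab.stay_of_gt (hzx.trans_lt h)]

lemma stay_mul_stay_of_lt_right (hab : IsHeckeWeights α β a b) {y z : ι} (h : y < z) (x : ι) :
    b x y * b x z = (α + β) * b x z := by
  rcases lt_or_ge x z with hxz | hzx
  · rw [hab.stay_of_lt hxz]; ring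
  · rw [hab.stay_of_gt (h.trans_le hzx)]

lemma flip_mul_stay_left (hab : IsHeckeWeights α β a b) (x y z : ι) :
    a x y * (b x z * b y x + b y z * b x y) = a x y * (b x z * b y z) := by
  rcases lt_trichotomy x y with h | rfl | h
  · rw [hab.stay_mul_stay_of_lt_left h, hab.stay_of_lt h, hab.stay_of_gt h]; ring
  · rw [hab.flip_self]; ring
  · rw [mul_comm (b x z) (b y z), hab.stay_mul_stay_of_lt_left h, hab.stay_of_lt h,
      hab.stay_of_gt h]; ring

lemma flip_mul_stay_right (hab : IsHeckeWeights α β a b) (x y z : ι) :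
    a y z * (b x z * b z y + b x y * b y z) = a y z * (b x y * b x z) := by
  rcases lt_trichotomy y z with h | rfl | h
  · rw [hab.stay_mul_stay_of_lt_right h, hab.stay_of_lt h, hab.stay_of_gt h]; ring
  · rw [hab.flip_self]; ring
  · rw [mul_comm (b x y) (b x z), hab.stay_mul_stay_of_lt_right h, hab.stay_of_lt h,
      hab.stay_of_gt h]; ring

lemma stay_eq_or_eq (hab : IsHeckeWeights α β a b) {x z : ι} (h : x ≠ z) (y : ι) :
    b x z = b x y ∨ b x z = b y z := by
  rcases h.lt_or_gt with h | h
  · rw [hab.stay_of_lt h]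
    exact (lt_or_ge x y).imp (fun hxy => (hab.stay_of_lt hxy).symm)
      fun hyx => (hab.stay_of_lt (hyx.trans_lt h)).symm
  · rw [hab.stay_of_gt h]
    exact (lt_or_ge y x).imp (fun hyx => (hab.stay_of_gt hyx).symm)
      fun hxy => (hab.stay_of_gt (h.trans_le hxy)).symm

lemma stay_triple (hab : IsHeckeWeights α β a b) (x y z : ι) :
    (b x y - b y z) * (b x z * (α + β - b x y - b y z) + b x y * b y z) = 0 := by
  rcases eq_or_ne x z with rfl | hxz
  · rcases eq_or_ne x y with rfl | hxy
    · ring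
    · linear_combination (b x y - b y x) *
        (hab.stay_mul_stay_swap hxy - b x x * hab.stay_add_stay hxy)
  · have hsq := hab.stay_mul_self hxz
    rcases hab.stay_eq_or_eq hxz y with h | h <;> rw [← h]
    · linear_combination (b y z - b x z) * hsq
    · linear_combination (b x z - b x y) * hsq

lemma braid_diagonal (hab : IsHeckeWeights α β a b) (x y z : ι) :
    a x y * a y x * b x z + b x y * b x y * b y z =
      a y z * a z y * b x z + b y z * b y z * b x y := by
  linear_combination hab.stay_triple x y z +
    b x z * (hab.flip_mul_flip_add x y - hab.flip_mul_flip_add y z)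

end IsHeckeWeights

/-- The operator with flip weights `a` and stay weights `b` on the tensor factors `s` and `t` of
`V^{⊗S}`, written in the basis of configurations `S → ι`: column `g` is the image of
`⊗ᵣ e_{g r}`. -/
def exchangeMatrix {A S ι : Type*} [CommRing A] [DecidableEq S] [Fintype S] [DecidableEq ι]
    (a b : ι → ι → A) (s t : S) : Matrix (S → ι) (S → ι) A :=
  fun f g => (if f = g ∘ Equiv.swap s t then a (g s) (g t) else 0) +
    (if f = g then b (g s) (g t) else 0)

/-- The operator with flip weights `a` and stay weights `b` on the tensor factors `i` and `i + 1`
(0-based) of `V^{⊗N}`. -/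
def adjacentExchange {A ι : Type*} [CommRing A] [DecidableEq ι] (a b : ι → ι → A) (N i : ℕ)
    (h : i + 1 < N) : Matrix (Fin N → ι) (Fin N → ι) A :=
  exchangeMatrix a b ⟨i, Nat.lt_of_succ_lt h⟩ ⟨i + 1, h⟩

section ExchangeMatrix

variable {A S ι : Type*} [CommRing A] [DecidableEq S] [Fintype S] [Fintype ι]

open Matrix

lemma vecMul_exchangeMatrix [DecidableEq ι] (a b : ι → ι → A) (s t : S) (v : (S → ι) → A)
    (g : S → ι) :
    (v ᵥ* exchangeMatrix a b s t) g =
      a (g s) (g t) * v (g ∘ Equiv.swap s t) + b (g s) (g t) * v g := by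
  simp only [vecMul, dotProduct, exchangeMatrix, mul_add, mul_ite, mul_zero,
    Finset.sum_add_distrib, Finset.sum_ite_eq', Finset.mem_univ, if_true]
  ring

theorem exchangeMatrix_commute [DecidableEq ι] (a b a' b' : ι → ι → A) {s t u w : S}
    (hsu : s ≠ u) (hsw : s ≠ w) (htu : t ≠ u) (htw : t ≠ w) :
    Commute (exchangeMatrix a b s t) (exchangeMatrix a' b' u w) := by
  refine ext_iff_vecMul.mpr fun v => funext fun g => ?_
  have hswap := (commute_swap_swap hsu hsw htu htw).eq
  simp only [← vecMul_vecMul, vecMul_exchangeMatrix, Function.comp_assoc, ← Equiv.Perm.coe_mul,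
    hswap]
  simp only [Function.comp_apply, Equiv.swap_apply_of_ne_of_ne hsu hsw,
    Equiv.swap_apply_of_ne_of_ne htu htw, Equiv.swap_apply_of_ne_of_ne hsu.symm htu.symm,
    Equiv.swap_apply_of_ne_of_ne hsw.symm htw.symm]
  ring

variable [LinearOrder ι] {α β : A} {a b : ι → ι → A}

theorem exchangeMatrix_quadratic (hab : IsHeckeWeights α β a b) (s t : S) :
    (exchangeMatrix a b s t - α • (1 : Matrix (S → ι) (S → ι) A)) *
      (exchangeMatrix a b s t - β • (1 : Matrix (S → ι) (S → ι) A)) = 0 := by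
  refine ext_iff_vecMul.mpr fun v => funext fun g => ?_
  simp only [← vecMul_vecMul, vecMul_sub, vecMul_smul, vecMul_one, vecMul_zero, Pi.sub_apply,
    Pi.smul_apply, Pi.zero_apply, smul_eq_mul, vecMul_exchangeMatrix, Function.comp_assoc,
    ← Equiv.Perm.coe_mul, Equiv.swap_mul_self, Equiv.Perm.coe_one, Function.comp_id]
  simp only [Function.comp_apply, Equiv.swap_apply_left, Equiv.swap_apply_right]
  linear_combination v g * hab.flip_mul_flip_add (g s) (g t) +
    v (g ∘ Equiv.swap s t) * hab.flip_mul_stay_add_stay (g s) (g t)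

theorem exchangeMatrix_braid (hab : IsHeckeWeights α β a b) {s t u : S} (hst : s ≠ t)
    (htu : t ≠ u) (hsu : s ≠ u) :
    exchangeMatrix a b s t * exchangeMatrix a b t u * exchangeMatrix a b s t =
      exchangeMatrix a b t u * exchangeMatrix a b s t * exchangeMatrix a b t u := by
  refine ext_iff_vecMul.mpr fun v => funext fun g => ?_
  simp only [← vecMul_vecMul, vecMul_exchangeMatrix, Function.comp_assoc, ← Equiv.Perm.coe_mul,
    Equiv.swap_mul_self, Equiv.Perm.coe_one, Function.comp_id,
    swap_braid hst htu hsu]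
  simp only [Equiv.Perm.coe_mul, Function.comp_apply, Equiv.swap_apply_left,
    Equiv.swap_apply_right, Equiv.swap_apply_of_ne_of_ne hst hsu,
    Equiv.swap_apply_of_ne_of_ne hsu.symm htu.symm]
  linear_combination v g * hab.braid_diagonal (g s) (g t) (g u) +
    v (g ∘ Equiv.swap s t) * hab.flip_mul_stay_left (g s) (g t) (g u) -
    v (g ∘ Equiv.swap t u) * hab.flip_mul_stay_right (g s) (g t) (g u)

end ExchangeMatrix

section SuperWeights

variable (m : ℕ)

/-- The coefficient of `e_y ⊗ e_x` in `R(e_x ⊗ e_y)` for `x ≠ y`, and `0` for `x = y`. -/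
def superFlip {M : ℕ} (x y : Fin M) : K :=
  if x = y then 0 else sgn m x y

/-- The coefficient of `e_x ⊗ e_y` in `R(e_x ⊗ e_y)`. -/
def superStay {M : ℕ} (x y : Fin M) : K :=
  if x = y then (if (x : ℕ) < m then q⁻¹ else -q) else if y < x then q⁻¹ - q else 0

lemma sgn_mul_sgn {M : ℕ} (x y : Fin M) : sgn m x y * sgn m y x = 1 := by
  simp only [sgn, and_comm (a := m ≤ (y : ℕ))]
  split_ifs <;> ring

lemma isHeckeWeights_superFlip_superStay {M : ℕ} :
    IsHeckeWeights (ι := Fin M) q⁻¹ (-q) (superFlip m) (superStay m) where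
  flip_self x := if_pos rfl
  flip_mul_flip h := by
    rw [superFlip, superFlip, if_neg h, if_neg h.symm, sgn_mul_sgn, mul_neg, neg_neg,
      inv_mul_cancel₀ RatFunc.X_ne_zero]
  stay_self x := by
    rw [superStay, if_pos rfl]
    split_ifs <;> ring
  stay_of_lt h := by rw [superStay, if_neg h.ne, if_neg h.not_gt]
  stay_of_gt h := by rw [superStay, if_neg h.ne', if_pos h, sub_eq_add_neg]

lemma Rmat_apply (n : ℕ) (p r : Fin (m + n) × Fin (m + n)) :
    Rmat m n p r = (if p.1 = r.2 ∧ p.2 = r.1 then superFlip m r.1 r.2 else 0) +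
      (if p.1 = r.1 ∧ p.2 = r.2 then superStay m r.1 r.2 else 0) := by
  unfold Rmat superFlip superStay
  simp only [Prod.ext_iff]
  split_ifs <;> simp_all

lemma Rop_eq_adjacentExchange (n N i : ℕ) (h : i + 1 < N) :
    Rop m n N i h = adjacentExchange (superFlip m) (superStay m) N i h := by
  ext f g
  have hprod : (∏ t : Fin N, if (t : ℕ) = i ∨ (t : ℕ) = i + 1 then (1 : K)
      else if f t = g t then 1 else 0) =
      if ∀ t : Fin N, t ≠ ⟨i, Nat.lt_of_succ_lt h⟩ → t ≠ ⟨i + 1, h⟩ → f t = g t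
        then 1 else 0 := by
    simp only [← ite_or, Fintype.prod_boole, or_assoc]
    simp only [or_iff_not_imp_left, Fin.ext_iff, ne_eq]
  rw [Rop, hprod, Rmat_apply, adjacentExchange, exchangeMatrix]
  simp only [eq_comp_swap_iff,
    eq_iff_eq_at_two_points (f := f) (g := g) (s := ⟨i, Nat.lt_of_succ_lt h⟩) (t := ⟨i + 1, h⟩),
    add_mul, ite_zero_mul_ite_zero, mul_one]

end SuperWeights

theorem hecke_algebra_action_general {A ι : Type*} [CommRing A] [Fintype ι] [LinearOrder ι]
    {α β : A} {a b : ι → ι → A} (hab : IsHeckeWeights α β a b) (N : ℕ) :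
    (∀ (i : ℕ) (h : i + 2 < N),
      adjacentExchange a b N i (Nat.lt_of_succ_lt h) * adjacentExchange a b N (i + 1) h *
          adjacentExchange a b N i (Nat.lt_of_succ_lt h) =
        adjacentExchange a b N (i + 1) h * adjacentExchange a b N i (Nat.lt_of_succ_lt h) *
          adjacentExchange a b N (i + 1) h) ∧
    (∀ (i j : ℕ) (hi : i + 1 < N) (hj : j + 1 < N), i + 2 ≤ j ∨ j + 2 ≤ i →
      adjacentExchange a b N i hi * adjacentExchange a b N j hj =
        adjacentExchange a b N j hj * adjacentExchange a b N i hi) ∧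
    (∀ (i : ℕ) (hi : i + 1 < N),
      (adjacentExchange a b N i hi - α • (1 : Matrix (Fin N → ι) (Fin N → ι) A)) *
        (adjacentExchange a b N i hi - β • (1 : Matrix (Fin N → ι) (Fin N → ι) A)) = 0) := by
  refine ⟨fun i h => ?_, fun i j hi hj hij => ?_, fun i hi => exchangeMatrix_quadratic hab _ _⟩
  · apply exchangeMatrix_braid hab <;> rw [Fin.ne_iff_vne] <;> dsimp only <;> omega
  · apply (exchangeMatrix_commute a b a b _ _ _ _).eq <;>
      rw [Fin.ne_iff_vne] <;> dsimp only <;> omega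

/-- The operators `R_i = Id^{⊗(i-1)} ⊗ R ⊗ Id^{⊗(N-i-1)}` on `V^{⊗N}` define an
action of the Hecke algebra `ℋ_N`: they satisfy the braid relation, the far
commutation relation, and the Hecke quadratic relation. -/
theorem hecke_algebra_action (m n N : ℕ) (hN : 2 ≤ N) :
    (∀ (i : ℕ) (h : i + 2 < N),
      Rop m n N i (by omega) * Rop m n N (i + 1) (by omega) * Rop m n N i (by omega)
        = Rop m n N (i + 1) (by omega) * Rop m n N i (by omega) * Rop m n N (i + 1) (by omega)) ∧
    (∀ (i j : ℕ) (hi : i + 1 < N) (hj : j + 1 < N), i + 2 ≤ j ∨ j + 2 ≤ i →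
      Rop m n N i hi * Rop m n N j hj = Rop m n N j hj * Rop m n N i hi) ∧
    (∀ (i : ℕ) (hi : i + 1 < N),
      (Rop m n N i hi - q⁻¹ • (1 : Matrix (Fin N → Fin (m + n)) (Fin N → Fin (m + n)) K))
        * (Rop m n N i hi + q • (1 : Matrix (Fin N → Fin (m + n)) (Fin N → Fin (m + n)) K)) = 0) := by
  simpa only [Rop_eq_adjacentExchange, neg_smul, sub_neg_eq_add] using
    hecke_algebra_action_general (isHeckeWeights_superFlip_superStay m) N
end
end

section
/- Quantum Schur–Weyl duality (double centralizer property): for every N ≥ 1, let A ⊆ End_K(V^{⊗N}) be the K-subalgebra generated by the Hecke operators R_i := Id^{⊗(i−1)} ⊗ R ⊗ Id^{⊗(N−i−1)} (1 ≤ i ≤ N−1), and let B ⊆ End_K(V^{⊗N}) be the K-subalgebra generated by the operators Δ^{(N)}(E_j) = ∑_{k=1}^{N} Id^{⊗(k−1)} ⊗ E_j ⊗ (K_j^{−1})^{⊗(N−k)}, Δ^{(N)}(F_j) = ∑_{k=1}^{N} K_j^{⊗(k−1)} ⊗ F_j ⊗ Id^{⊗(N−k)} (1 ≤ j ≤ m−1)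 and L_l^{⊗N}, (L_l^{−1})^{⊗N} (1 ≤ l ≤ m). Then A and B are each other's centralizers in End_K(V^{⊗N}): the centralizer of A equals B and the centralizer of B equals A. -/
set_option synthInstance.maxHeartbeats 400000
set_option maxHeartbeats 1000000

noncomputable section

/-- The Hecke operator `R_i = Id^{⊗i} ⊗ R ⊗ Id^{⊗(N-i-2)}` on `V^{⊗N}`
(0-based: it acts by the R-matrix on tensor factors `i` and `i+1` and by the
identity elsewhere). -/
def Rop0 (m N : ℕ) (i : ℕ) (h : i + 1 < N) :
    Matrix (Fin N → Fin m) (Fin N → Fin m) K :=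
  fun f g =>
    R0mat m (f ⟨i, Nat.lt_of_succ_lt h⟩, f ⟨i + 1, h⟩)
        (g ⟨i, Nat.lt_of_succ_lt h⟩, g ⟨i + 1, h⟩) *
      ∏ t : Fin N, (if (t : ℕ) = i ∨ (t : ℕ) = i + 1 then 1
        else if f t = g t then 1 else 0)

/-- The operator `B^{⊗(k-1)} ⊗ A ⊗ C^{⊗(N-k)}` on `V^{⊗N}`: `B` on tensor
factors before position `k`, `A` at `k`, and `C` after `k`. -/
def place (m N : ℕ) (B A C : Matrix (Fin m) (Fin m) K) (k : Fin N) :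
    Matrix (Fin N → Fin m) (Fin N → Fin m) K :=
  fun f g => ∏ t : Fin N,
    (if t < k then B (f t) (g t)
     else if t = k then A (f t) (g t) else C (f t) (g t))

/-- The Kronecker power `A^{⊗N}` acting on `V^{⊗N}`. -/
def kpow (m N : ℕ) (A : Matrix (Fin m) (Fin m) K) :
    Matrix (Fin N → Fin m) (Fin N → Fin m) K :=
  fun f g => ∏ t : Fin N, A (f t) (g t)

/-- The iterated coproduct operator
`Δ^{(N)}(E_j) = ∑ₖ Id^{⊗(k-1)} ⊗ E_j ⊗ (K_j⁻¹)^{⊗(N-k)}` on `V^{⊗N}`. -/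
def DeltaEN (m N j : ℕ) : Matrix (Fin N → Fin m) (Fin N → Fin m) K :=
  ∑ k : Fin N, place m N 1 (Emat m j) (KmatInv m j) k

/-- The iterated coproduct operator
`Δ^{(N)}(F_j) = ∑ₖ K_j^{⊗(k-1)} ⊗ F_j ⊗ Id^{⊗(N-k)}` on `V^{⊗N}`. -/
def DeltaFN (m N j : ℕ) : Matrix (Fin N → Fin m) (Fin N → Fin m) K :=
  ∑ k : Fin N, place m N (Kmat m j) (Fmat m j) 1 k

/-- The generating set of the Hecke side: the operators `R_i` (`1 ≤ i ≤ N-1`,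
here 0-based `i + 1 < N`) on `V^{⊗N}`. -/
def HeckeGens (m N : ℕ) : Set (Matrix (Fin N → Fin m) (Fin N → Fin m) K) :=
  { X | ∃ (i : ℕ) (h : i + 1 < N), X = Rop0 m N i h }

/-- The generating set of the quantum-group side: the operators `Δ^{(N)}(E_j)`,
`Δ^{(N)}(F_j)` (`1 ≤ j ≤ m-1`, 0-based `j + 1 < m`) and `L_l^{⊗N}`,
`(L_l⁻¹)^{⊗N}` (`1 ≤ l ≤ m`, 0-based `l < m`) on `V^{⊗N}`. -/
def QGGens (m N : ℕ) : Set (Matrix (Fin N → Fin m) (Fin N → Fin m) K) :=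
  { X | (∃ j : ℕ, j + 1 < m ∧ (X = DeltaEN m N j ∨ X = DeltaFN m N j)) ∨
        (∃ l : ℕ, l < m ∧
          (X = kpow m N (Lmat m l) ∨ X = kpow m N (LmatInv m l))) }

/-!
The `R_i` are symmetric matrices, so the algebra `A` is stable under transposition; as `ℚ(q)` is
formally real, orthogonal complements show that `V^{⊗N}` is a semisimple `A`-module, and `A` is its
own double centralizer by the density theorem. It remains to see that `B` is the centralizer of `A`.

`B` commutes with `A` by a computation in two tensor factors. Conversely, specialise at `q = 1`: the
`R_i` become the adjacent transpositions of tensor factors, while the specialisation of `B` contains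
the action of `𝔤𝔩_m`, the diagonal part arising from `(L_l^{⊗N} - 1) / (q - 1)`. By classical
Schur–Weyl duality, every matrix with entries in `ℚ[q]` that commutes with `A` is congruent modulo
`q - 1` to an element of `B`, and Nakayama's lemma turns this into an equality over `ℚ(q)`.
-/

open Matrix Polynomial nonZeroDivisors Kronecker

namespace SchurWeyl

attribute [local instance] LieRing.ofAssociativeRing

section DoubleCentralizer

theorem centralizer_centralizer_of_isSemisimpleModule {k V : Type*} [Field k] [AddCommGroup V]
    [Module k V] [FiniteDimensional k V] (A : Subalgebra k (Module.End k V))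
    [IsSemisimpleModule A V] :
    Subalgebra.centralizer k (Subalgebra.centralizer k (A : Set (Module.End k V)) : Set _) = A := by
  refine le_antisymm (fun X hX => ?_) fun a ha Y hY => (hY a ha).symm
  let toCentralizer : Module.End A V → Subalgebra.centralizer k (A : Set (Module.End k V)) :=
    fun T => ⟨T.restrictScalars k, fun a ha => LinearMap.ext fun v => (T.map_smul ⟨a, ha⟩ v).symm⟩
  let X' : Module.End (Module.End A V) V :=
    { X with map_smul' := fun T v => (LinearMap.congr_fun (hX _ (toCentralizer T).2) v).symm }
  classical
  let b := Module.finBasis k V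
  obtain ⟨a, ha⟩ := jacobson_density X' (Finset.univ.image b)
  have hXa : X = a := b.ext fun i => ha (b i) (Finset.mem_image_of_mem _ (Finset.mem_univ i))
  exact hXa ▸ a.2

variable {n k : Type*} [Fintype n]

theorem eq_zero_of_dotProduct_self_eq_zero [Ring k] [IsFormallyReal k] {v : n → k}
    (hv : v ⬝ᵥ v = 0) : v = 0 := by
  classical
  funext i
  rw [dotProduct, ← Finset.add_sum_erase _ _ (Finset.mem_univ i)] at hv
  have hvi := IsFormallyReal.eq_zero_of_add_right (.mul_self _) (IsSumSq.sum_mul_self _ _) hv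
  exact (pow_eq_zero_iff two_ne_zero).mp ((sq _).trans hvi)

theorem isCompl_orthogonal_dotProductBilin [Field k] [IsFormallyReal k]
    (W : Submodule k (n → k)) :
    IsCompl W (LinearMap.BilinForm.orthogonal (dotProductBilin k k) W) := by
  rw [LinearMap.BilinForm.isCompl_orthogonal_iff_disjoint fun v w h =>
    (dotProduct_comm w v).trans h]
  exact Submodule.disjoint_def.mpr fun v hv hv' => eq_zero_of_dotProduct_self_eq_zero (hv' v hv)

variable [DecidableEq n]

/-- The orthogonal complement of an invariant subspace is invariant under the transposes. -/
theorem isSemisimpleModule_map_toLinAlgEquiv' [Field k] [IsFormallyReal k]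
    (A : Subalgebra k (Matrix n n k)) (hA : ∀ a ∈ A, aᵀ ∈ A) :
    IsSemisimpleModule (A.map (toLinAlgEquiv' (R := k) (n := n)).toAlgHom) (n → k) := by
  refine { exists_isCompl := fun W => ?_ }
  let U := LinearMap.BilinForm.orthogonal (dotProductBilin k k) (W.restrictScalars k)
  have hU : ∀ a : A.map (toLinAlgEquiv' (R := k) (n := n)).toAlgHom, ∀ u ∈ U, a • u ∈ U := by
    rintro ⟨_, a, ha, rfl⟩ u hu w hw
    have haw : aᵀ *ᵥ w ∈ W := W.smul_mem ⟨_, aᵀ, hA a ha, rfl⟩ hw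
    calc w ⬝ᵥ a *ᵥ u = (aᵀ *ᵥ w) ⬝ᵥ u := by rw [dotProduct_mulVec, mulVec_transpose]
      _ = 0 := hu _ haw
  refine ⟨{ U with smul_mem' := fun a u hu => hU a u hu }, ?_⟩
  rw [← Submodule.isCompl_restrictScalars_iff k]
  exact isCompl_orthogonal_dotProductBilin (W.restrictScalars k)

theorem centralizer_centralizer_of_transpose_mem [Field k] [IsFormallyReal k]
    (A : Subalgebra k (Matrix n n k)) (hA : ∀ a ∈ A, aᵀ ∈ A) :
    Subalgebra.centralizer k (Subalgebra.centralizer k (A : Set (Matrix n n k)) : Set _) = A := by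
  refine le_antisymm (fun X hX => ?_) fun a ha Y hY => (hY a ha).symm
  let φ : Matrix n n k ≃ₐ[k] Module.End k (n → k) := toLinAlgEquiv'
  have := isSemisimpleModule_map_toLinAlgEquiv' A hA
  have hφX : φ X ∈ A.map φ.toAlgHom := by
    rw [← centralizer_centralizer_of_isSemisimpleModule (A.map φ.toAlgHom)]
    intro T hT
    obtain ⟨Y, rfl⟩ := φ.surjective T
    have hY : Y ∈ Subalgebra.centralizer k (A : Set (Matrix n n k)) := fun a ha =>
      φ.injective <| by simpa only [map_mul] using hT (φ a) ⟨a, ha, rfl⟩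
    rw [← map_mul, ← map_mul, hX Y hY]
  obtain ⟨a, ha, hXa⟩ := hφX
  exact φ.injective hXa ▸ ha

end DoubleCentralizer

section FormallyReal

theorem isFormallyReal_of_injective {R S : Type*} [Ring R] [Ring S]
    [IsFormallyReal S] (φ : R →+* S) (hφ : Function.Injective φ) : IsFormallyReal R where
  not_isSumNonzeroSq_zero h := by
    have map_isSumNonzeroSq : ∀ {x : R}, IsSumNonzeroSq x → IsSumNonzeroSq (φ x) := by
      intro x hx
      induction hx with
      | sq ha => simpa using .sq ((map_ne_zero_iff φ hφ).mpr ha)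
      | sq_add ha _ ih => simpa using .sq_add ((map_ne_zero_iff φ hφ).mpr ha) ih
    exact IsFormallyReal.not_isSumNonzeroSq_zero (R := S) (map_zero φ ▸ map_isSumNonzeroSq h)

/-- Substituting a transcendental real number for the variable embeds `ℚ(q)` in `ℝ`. -/
instance isFormallyReal_ratFunc : IsFormallyReal (RatFunc ℚ) := by
  have htr : Transcendental ℚ (liouvilleNumber ((2 : ℕ) : ℝ)) := fun h =>
    transcendental_liouvilleNumber le_rfl ((IsFractionRing.isAlgebraic_iff ℤ ℚ ℝ).mpr h)
  exact isFormallyReal_of_injective _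
    (RatFunc.liftAlgHom_injective _ (transcendental_iff_injective.mp htr))

end FormallyReal

section Descent

instance isLocalizedModule_mapMatrix {R A A' m n : Type*} [CommRing R] (S : Submonoid R)
    [AddCommGroup A] [Module R A] [AddCommGroup A'] [Module R A']
    [Finite m] [Finite n] (f : A →ₗ[R] A') [IsLocalizedModule S f] :
    IsLocalizedModule S (f.mapMatrix : Matrix m n A →ₗ[R] Matrix m n A') :=
  inferInstanceAs (IsLocalizedModule S (LinearMap.pi fun i =>
    (LinearMap.pi fun j => f ∘ₗ LinearMap.proj j) ∘ₗ LinearMap.proj i))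

variable {R F M V : Type*} [CommRing R] [IsDomain R] [Field F] [Algebra R F] [IsFractionRing R F]
  [AddCommGroup M] [Module R M] [IsNoetherian R M] [AddCommGroup V] [Module R V] [Module F V]
  [IsScalarTower R F V]

theorem le_of_forall_exists_eq_add_smul (f : M →ₗ[R] V) [IsLocalizedModule R⁰ f] {p : R}
    (hp₀ : p ≠ 0) (hp : ¬IsUnit p) {B C : Submodule F V} (hBC : B ≤ C)
    (h : ∀ x, f x ∈ C → ∃ y z, f y ∈ B ∧ x = y + p • z) : C ≤ B := by
  let B₀ := (B.restrictScalars R).comap f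
  let C₀ := ((C.restrictScalars R).comap f).map B₀.mkQ
  have hC₀ : C₀ ≤ Ideal.span {p} • C₀ := by
    rintro _ ⟨x, hx, rfl⟩
    obtain ⟨y, z, hy, rfl⟩ := h x hx
    have hz : f z ∈ C := by
      rw [← C.smul_mem_iff ((map_ne_zero_iff _ (IsFractionRing.injective R F)).mpr hp₀),
        algebraMap_smul, ← map_smul]
      exact (C.add_mem_iff_right (hBC hy)).mp (map_add f y _ ▸ hx)
    have hy' : B₀.mkQ y = 0 := (Submodule.Quotient.mk_eq_zero B₀).mpr hy
    rw [map_add, hy', zero_add, map_smul]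
    exact Submodule.smul_mem_smul (Ideal.mem_span_singleton_self p) ⟨z, hz, rfl⟩
  obtain ⟨r, hr, hrC⟩ :=
    Submodule.exists_sub_one_mem_and_smul_eq_zero_of_fg_of_le_smul _ C₀
      (IsNoetherian.noetherian _) hC₀
  have hr0 : r ≠ 0 := by
    rintro rfl
    rw [zero_sub, neg_mem_iff, Ideal.mem_span_singleton] at hr
    exact hp (isUnit_of_dvd_one hr)
  intro v hv
  obtain ⟨⟨x, s⟩, hx⟩ := IsLocalizedModule.surj R⁰ f v
  have hxC : f x ∈ C := hx ▸ (C.restrictScalars R).smul_mem s.1 hv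
  have hrx : f (r • x) ∈ B :=
    (Submodule.Quotient.mk_eq_zero B₀).mp (hrC _ ⟨x, hxC, rfl⟩)
  have hc : algebraMap R F (r * s) ≠ 0 := by
    simpa using mul_ne_zero hr0 (nonZeroDivisors.ne_zero s.2)
  rw [← B.smul_mem_iff hc, algebraMap_smul, mul_smul]
  rw [map_smul, ← hx] at hrx
  exact hrx

end Descent

section PiKronecker

variable {R S ι n : Type*} [CommRing R] [CommRing S] [Fintype ι]

/-- The tensor product `⨂ t, c t` of a family of square matrices, as a multilinear map. Its value
is written in the basis of `(Rⁿ)^{⊗ι}` indexed by `ι → n`. -/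
def piKronecker : MultilinearMap R (fun _ : ι => Matrix n n R) (Matrix (ι → n) (ι → n) R) :=
  MultilinearMap.pi fun f => MultilinearMap.pi fun g =>
    (MultilinearMap.mkPiAlgebra R ι R).compLinearMap fun t => entryLinearMap R R (f t) (g t)

theorem piKronecker_apply (c : ι → Matrix n n R) (f g : ι → n) :
    piKronecker c f g = ∏ t, c t (f t) (g t) :=
  rfl

theorem map_piKronecker (φ : R →+* S) (c : ι → Matrix n n R) :
    (piKronecker c).map φ = piKronecker fun t => (c t).map φ := by
  ext f g
  simp only [map_apply, piKronecker_apply, map_prod]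

theorem piKronecker_mul [DecidableEq ι] [Fintype n] (c d : ι → Matrix n n R) :
    piKronecker (c * d) = piKronecker c * piKronecker d := by
  ext f g
  simp only [piKronecker_apply, mul_apply, Pi.mul_apply, Fintype.prod_sum,
    Finset.prod_mul_distrib]

variable [DecidableEq n]

theorem piKronecker_diagonal (d : ι → n → R) :
    piKronecker (fun t => diagonal (d t)) = diagonal fun f => ∏ t, d t (f t) := by
  ext f g
  simp only [piKronecker_apply, diagonal_apply, funext_iff]
  split_ifs with h
  · exact Finset.prod_congr rfl fun t _ => if_pos (h t)
  · obtain ⟨t, ht⟩ := not_forall.mp h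
    exact Finset.prod_eq_zero (Finset.mem_univ t) (if_neg ht)

theorem piKronecker_one : piKronecker (1 : ι → Matrix n n R) = 1 := by
  ext f g
  simp only [piKronecker_apply, Pi.one_apply, one_apply, Finset.prod_ite_zero]
  simp [funext_iff]

theorem piKronecker_single (f g : ι → n) :
    piKronecker (fun t => single (f t) (g t) (1 : R)) = single f g 1 := by
  ext f' g'
  simp only [piKronecker_apply, single_apply, funext_iff, ← forall_and]
  split_ifs with h
  · exact Finset.prod_eq_one fun t _ => if_pos (h t)
  · obtain ⟨t, ht⟩ := not_forall.mp h
    exact Finset.prod_eq_zero (Finset.mem_univ t) (if_neg ht)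

end PiKronecker

section GLAction

variable {R ι n : Type*} [CommRing R] [Fintype ι] [DecidableEq ι] [Fintype n] [DecidableEq n]

variable (ι) in
/-- The action of `𝔤𝔩ₙ` on the tensor power `(Rⁿ)^{⊗ι}`: the sum over all sites `k` of the action
on the `k`-th tensor factor. -/
def glAction : Matrix n n R →ₗ⁅R⁆ Matrix (ι → n) (ι → n) R where
  toLinearMap := ∑ k, piKronecker.toLinearMap 1 k
  map_lie' {a b} := by
    have lie_site (k l : ι) : ⁅piKronecker (Pi.mulSingle k a), piKronecker (Pi.mulSingle l b)⁆
        = if k = l then piKronecker (Pi.mulSingle k ⁅a, b⁆) else 0 := by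
      split_ifs with hkl
      · subst hkl
        rw [Ring.lie_def, Ring.lie_def, ← piKronecker_mul, ← piKronecker_mul, ← Pi.mulSingle_mul,
          ← Pi.mulSingle_mul]
        exact ((piKronecker (R := R) (n := n)).map_update_sub 1 k _ _).symm
      · rw [Ring.lie_def, ← piKronecker_mul, ← piKronecker_mul,
          (Pi.mulSingle_commute (f := fun _ : ι => Matrix n n R) hkl a b).eq, sub_self]
    simp only [AddHom.toFun_eq_coe, LinearMap.coe_toAddHom, LinearMap.sum_apply]
    change _ = ⁅∑ k, piKronecker (Pi.mulSingle k a), ∑ l, piKronecker (Pi.mulSingle l b)⁆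
    rw [sum_lie_sum]
    simp only [lie_site, Finset.sum_ite_eq, Finset.mem_univ, if_true]
    rfl

theorem glAction_apply (a : Matrix n n R) :
    glAction ι a = ∑ k, piKronecker (Pi.mulSingle k a) :=
  LinearMap.sum_apply _ _ _

theorem glAction_single_self (l : n) :
    glAction ι (single l l (1 : R)) = diagonal fun f => (Finset.card {t | f t = l} : R) := by
  have mulSingle_eq (k : ι) : Pi.mulSingle k (single l l (1 : R)) =
      fun t => diagonal ((Pi.mulSingle k (Pi.single l 1) : ι → n → R) t) := by
    funext t
    obtain rfl | ht := eq_or_ne t k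
    · rw [Pi.mulSingle_eq_same, Pi.mulSingle_eq_same, diagonal_single]
    · rw [Pi.mulSingle_eq_of_ne ht, Pi.mulSingle_eq_of_ne ht]
      exact diagonal_one.symm
  have prod_eq (k : ι) (f : ι → n) :
      ∏ t, (Pi.mulSingle k (Pi.single l 1) : ι → n → R) t (f t) = if f k = l then 1 else 0 := by
    rw [Fintype.prod_eq_single k fun t ht => by rw [Pi.mulSingle_eq_of_ne ht, Pi.one_apply],
      Pi.mulSingle_eq_same, Pi.single_apply]
  simp only [glAction_apply, mulSingle_eq, piKronecker_diagonal, prod_eq]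
  ext f g
  rw [Matrix.sum_apply]
  simp only [diagonal_apply]
  split_ifs <;> simp

end GLAction

section ExtendMulSingle

variable {ι κ M : Type*} [DecidableEq ι] [Monoid M]

theorem mulSingle_mul_extend_apply [DecidableEq κ] (e : κ ↪ ι) (c : κ → M) (s : κ) (a : M) :
    Pi.mulSingle (e s) a * Function.extend e c 1 =
      Function.extend e (Function.update c s (a * c s)) 1 := by
  funext t
  by_cases ht : ∃ r, e r = t
  · obtain ⟨r, rfl⟩ := ht
    rcases eq_or_ne r s with rfl | hrs
    · simp [e.injective.extend_apply]
    · simp [e.injective.extend_apply, hrs]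
  · have hts : t ≠ e s := fun h => ht ⟨s, h.symm⟩
    simp [Function.extend_apply' _ _ _ ht, hts]

theorem mulSingle_mul_extend_of_notMem_range (e : κ ↪ ι) (c : κ → M)
    {k : ι} (hk : k ∉ Set.range e) (a : M) :
    Pi.mulSingle k a * Function.extend e c 1 =
      Function.extend (e.optionElim k hk) (fun o => o.elim a c) 1 := by
  funext t
  by_cases ht : ∃ o, e.optionElim k hk o = t
  · obtain ⟨_ | s, rfl⟩ := ht
    · rw [(e.optionElim k hk).injective.extend_apply]
      simp [Function.extend_apply' _ _ _ hk]
    · have hsk : e s ≠ k := fun h => hk ⟨s, h⟩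
      rw [(e.optionElim k hk).injective.extend_apply]
      simp [e.injective.extend_apply, hsk]
  · have htk : t ≠ k := fun h => ht ⟨none, h.symm⟩
    have hte : ¬∃ s, e s = t := fun ⟨s, hs⟩ => ht ⟨some s, hs⟩
    simp [Function.extend_apply' _ _ _ ht, Function.extend_apply' _ _ _ hte, htk]

end ExtendMulSingle

section PlacementSum

theorem sum_eq_sum_apply_add_sum_compl_range {ι κ M : Type*} [Fintype ι]
    [Fintype κ] [AddCommMonoid M] (e : κ ↪ ι) [Fintype ↥(Set.range e)ᶜ] (h : ι → M) :
    ∑ k, h k = ∑ s, h (e s) + ∑ k : ↥(Set.range e)ᶜ, h k := by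
  classical
  let ε : κ ⊕ ↥(Set.range e)ᶜ ≃ ι :=
    ((Equiv.ofInjective e e.injective).sumCongr (Equiv.refl _)).trans (Equiv.Set.sumCompl _)
  rw [← ε.sum_comp, Fintype.sum_sum_type]
  rfl

variable {R ι κ n : Type*} [CommRing R] [Fintype ι] [Fintype κ] [DecidableEq n]

variable (ι) in
/-- The sum over all injective placements of the matrices `c s` on distinct sites of
`(Rⁿ)^{⊗ι}`, with the identity on the remaining sites. -/
def placementSum (c : κ → Matrix n n R) : Matrix (ι → n) (ι → n) R :=
  ∑ e : κ ↪ ι, piKronecker (Function.extend e c 1)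

theorem placementSum_comp_equiv {κ' : Type*} [Fintype κ'] (ε : κ' ≃ κ) (c : κ → Matrix n n R) :
    placementSum ι (c ∘ ε) = placementSum ι c := by
  have extend_equiv (e : κ → Matrix n n R) : Function.extend ε (c ∘ ε) e = c := by
    funext s
    rw [← ε.apply_symm_apply s, ε.injective.extend_apply, Function.comp_apply]
  refine (Fintype.sum_equiv (Equiv.embeddingCongr ε.symm (Equiv.refl ι)) _ _ fun e => ?_).symm
  change _ = piKronecker (Function.extend (e ∘ ε) (c ∘ ε) 1)
  rw [ε.injective.extend_comp e.injective, extend_equiv]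

theorem placementSum_of_isEmpty [IsEmpty κ] (c : κ → Matrix n n R) : placementSum ι c = 1 := by
  rw [placementSum, Fintype.sum_unique, Function.extend_of_isEmpty, piKronecker_one]

variable [DecidableEq ι]

theorem placementSum_single (f g : ι → n) :
    placementSum ι (fun t => single (f t) (g t) (1 : R)) =
      ∑ σ : Equiv.Perm ι, single (f ∘ σ) (g ∘ σ) 1 := by
  refine (Fintype.sum_equiv ((Equiv.inv _).trans (Equiv.embeddingEquivOfFinite ι).symm) _ _
    fun σ => ?_).symm
  rw [← piKronecker_single]
  congr 1
  funext t
  change _ = Function.extend (σ.symm : ι → ι) _ _ t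
  rw [← σ.symm_apply_apply t, σ.symm.injective.extend_apply]
  simp

variable [Fintype n]

theorem glAction_mul_placementSum [DecidableEq κ] (a : Matrix n n R) (c : κ → Matrix n n R) :
    glAction ι a * placementSum ι c = ∑ s, placementSum ι (Function.update c s (a * c s)) +
      placementSum ι fun o : Option κ => o.elim a c := by
  classical
  have hoption : placementSum ι (fun o : Option κ => o.elim a c) = ∑ e : κ ↪ ι,
      ∑ k : ↥(Set.range e)ᶜ, piKronecker (Pi.mulSingle k.1 a * Function.extend e c 1) := by
    rw [placementSum, ← (Function.Embedding.optionEmbeddingEquiv κ ι).symm.sum_comp,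
      Fintype.sum_sigma]
    refine Finset.sum_congr rfl fun e _ => Finset.sum_congr rfl fun k _ => ?_
    rw [mulSingle_mul_extend_of_notMem_range e c k.2]
    rfl
  rw [hoption]
  simp only [glAction_apply, placementSum, Finset.sum_mul_sum, ← piKronecker_mul]
  rw [Finset.sum_comm, Finset.sum_comm (s := (Finset.univ : Finset κ)), ← Finset.sum_add_distrib]
  refine Finset.sum_congr rfl fun e _ => ?_
  rw [sum_eq_sum_apply_add_sum_compl_range e]
  simp only [mulSingle_mul_extend_apply]

theorem placementSum_mem (S : Subalgebra R (Matrix (ι → n) (ι → n) R))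
    (hS : ∀ a : Matrix n n R, glAction ι a ∈ S) (c : κ → Matrix n n R) :
    placementSum ι c ∈ S := by
  revert c
  refine Fintype.induction_empty_option
    (P := fun κ _ => ∀ c : κ → Matrix n n R, placementSum ι c ∈ S) ?_ ?_ ?_ κ
  · intro κ κ' _ ε ih c
    let := Fintype.ofEquiv κ' ε.symm
    rw [← placementSum_comp_equiv ε]
    exact ih _
  · exact fun c => (placementSum_of_isEmpty (ι := ι) c).symm ▸ S.one_mem
  · intro κ _ ih c
    classical
    have hc : c = fun o => o.elim (c none) (c ∘ some) := by
      funext o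
      cases o <;> rfl
    rw [hc, eq_sub_of_add_eq' (glAction_mul_placementSum (c none) (c ∘ some)).symm]
    exact S.sub_mem (S.mul_mem (hS _) (ih _)) (S.sum_mem fun s _ => ih _)

theorem mem_of_glAction_mem {k : Type*} [Field k] [CharZero k]
    (S : Subalgebra k (Matrix (ι → n) (ι → n) k)) (hS : ∀ a : Matrix n n k, glAction ι a ∈ S)
    {Y : Matrix (ι → n) (ι → n) k} (hY : ∀ (σ : Equiv.Perm ι) f g, Y (f ∘ σ) (g ∘ σ) = Y f g) :
    Y ∈ S := by
  have reindex (σ : Equiv.Perm ι) : ∑ f, ∑ g, Y f g • single (f ∘ σ) (g ∘ σ) (1 : k) = Y := by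
    have hσ (f g : ι → n) :
        Y f g • single (f ∘ σ) (g ∘ σ) (1 : k) = single (f ∘ σ) (g ∘ σ) (Y (f ∘ σ) (g ∘ σ)) := by
      rw [hY, smul_single, smul_eq_mul, mul_one]
    let e : (ι → n) ≃ (ι → n) := σ.symm.arrowCongr (Equiv.refl n)
    refine Eq.trans ?_ (matrix_eq_sum_single Y).symm
    exact Fintype.sum_equiv e _ _ fun f => Fintype.sum_equiv e _ _ fun g => hσ f g
  have hsum : (Fintype.card (Equiv.Perm ι) : k) • Y =
      ∑ f, ∑ g, Y f g • placementSum ι fun t => single (f t) (g t) (1 : k) := by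
    simp only [placementSum_single, Finset.smul_sum]
    simp only [Finset.sum_comm (t := (Finset.univ : Finset (Equiv.Perm ι)))]
    simp only [reindex, Finset.sum_const, Finset.card_univ, Nat.cast_smul_eq_nsmul]
  have hcard : (Fintype.card (Equiv.Perm ι) : k) ≠ 0 := Nat.cast_ne_zero.mpr Fintype.card_ne_zero
  refine (S.toSubmodule.smul_mem_iff hcard).mp ?_
  rw [hsum]
  exact sum_mem fun f _ => sum_mem fun g _ => S.smul_mem (placementSum_mem S hS _) _

end PlacementSum

section GeneratingGL

variable {R : Type*} [CommRing R] {m : ℕ}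

theorem lie_single_single {n : Type*} [Fintype n] [DecidableEq n] {i j l : n} (hil : i ≠ l) :
    ⁅single i j (1 : R), single j l (1 : R)⁆ = single i l 1 := by
  rw [Ring.lie_def, single_mul_single_same, single_mul_single_of_ne _ _ _ _ hil.symm, mul_one,
    sub_zero]

theorem lieSubalgebra_eq_top_of_single_mem {L : LieSubalgebra R (Matrix (Fin m) (Fin m) R)}
    (hdiag : ∀ i, single i i 1 ∈ L)
    (hadj : ∀ i j : Fin m, (i : ℕ) + 1 = j → single i j 1 ∈ L ∧ single j i 1 ∈ L) : L = ⊤ := by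
  have single_mem (d : ℕ) : ∀ i j : Fin m, (i : ℕ) + d = j →
      single i j 1 ∈ L ∧ single j i 1 ∈ L := by
    induction d with
    | zero =>
      intro i j hij
      obtain rfl : i = j := Fin.ext hij
      exact ⟨hdiag i, hdiag i⟩
    | succ d ih =>
      intro i j hij
      let l : Fin m := ⟨i + d, by omega⟩
      have hij' : i ≠ j := by omega
      rw [← lie_single_single (j := l) hij', ← lie_single_single (j := l) hij'.symm]
      exact ⟨L.lie_mem (ih i l rfl).1 (hadj l j hij).1, L.lie_mem (hadj l j hij).2 (ih i l rfl).2⟩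
  refine eq_top_iff.mpr fun a _ => ?_
  rw [matrix_eq_sum_single a]
  refine sum_mem fun i _ => sum_mem fun j _ => ?_
  rw [← mul_one (a i j), ← smul_eq_mul, ← smul_single]
  refine L.smul_mem _ ?_
  rcases le_total i j with hij | hij
  · exact (single_mem (j - i) i j (by omega)).1
  · exact (single_mem (i - j) j i (by omega)).2

end GeneratingGL

section OnPair

@[to_additive]
theorem prod_eq_mul_mul_prod_compl_pair {ι M : Type*} [Fintype ι] [DecidableEq ι] [CommMonoid M]
    {a b : ι} (hab : a ≠ b) (h : ι → M) :
    ∏ t, h t = h a * h b * ∏ t : {t // t ≠ a ∧ t ≠ b}, h t := by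
  rw [← Finset.prod_mul_prod_compl {a, b}, Finset.prod_pair hab,
    Finset.prod_subtype (p := fun t => t ≠ a ∧ t ≠ b) {a, b}ᶜ (by simp)]

variable {R S ι n : Type*} [CommRing R] [CommRing S] [DecidableEq ι] {a b : ι}

/-- Splitting off the two coordinates `a ≠ b` of a multi-index. -/
def pairSplit (hab : a ≠ b) : (ι → n) ≃ (n × n) × ({t // t ≠ a ∧ t ≠ b} → n) where
  toFun f := ((f a, f b), fun t => f t)
  invFun x t := if ha : t = a then x.1.1 else if hb : t = b then x.1.2 else x.2 ⟨t, ha, hb⟩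
  left_inv f := by
    funext t
    dsimp only
    split_ifs with ha hb <;> simp only [*]
  right_inv x := by
    ext t
    · simp
    · simp [hab.symm]
    · simp [t.2.1, t.2.2]

/-- The operator on `(Rⁿ)^{⊗ι}` acting by `T` on the tensor factors `a`, `b` (in this order) and
by `Z` on the remaining ones. -/
def onPair (hab : a ≠ b) (T : Matrix (n × n) (n × n) R)
    (Z : Matrix ({t // t ≠ a ∧ t ≠ b} → n) ({t // t ≠ a ∧ t ≠ b} → n) R) :
    Matrix (ι → n) (ι → n) R :=
  (T ⊗ₖ Z).submatrix (pairSplit hab) (pairSplit hab)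

variable (hab : a ≠ b)

theorem onPair_add (T T' : Matrix (n × n) (n × n) R) (Z) :
    onPair hab (T + T') Z = onPair hab T Z + onPair hab T' Z := by
  rw [onPair, add_kronecker]
  rfl

theorem onPair_smul (r : R) (T : Matrix (n × n) (n × n) R) (Z) :
    onPair hab (r • T) Z = r • onPair hab T Z := by
  rw [onPair, smul_kronecker]
  rfl

theorem transpose_onPair (T : Matrix (n × n) (n × n) R) (Z) :
    (onPair hab T Z)ᵀ = onPair hab Tᵀ Zᵀ :=
  rfl

theorem map_onPair (φ : R →+* S) (T : Matrix (n × n) (n × n) R) (Z) :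
    (onPair hab T Z).map φ = onPair hab (T.map φ) (Z.map φ) := by
  ext f g
  exact map_mul φ _ _

theorem piKronecker_eq_onPair [Fintype ι] (c : ι → Matrix n n R) :
    piKronecker c = onPair hab (c a ⊗ₖ c b) (piKronecker fun t => c t) := by
  ext f g
  exact prod_eq_mul_mul_prod_compl_pair hab _

variable [Fintype ι]

theorem onPair_mul [Fintype n] (T T' : Matrix (n × n) (n × n) R) (Z Z') :
    onPair hab T Z * onPair hab T' Z' = onPair hab (T * T') (Z * Z') := by
  rw [onPair, onPair, onPair, submatrix_mul_equiv, mul_kronecker_mul]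

variable [DecidableEq n]

theorem onPair_flip :
    onPair hab ((1 : Matrix (n × n) (n × n) R).submatrix id Prod.swap) 1 =
      (1 : Matrix (ι → n) (ι → n) R).submatrix id ((Equiv.swap a b).arrowCongr (.refl n)) := by
  ext f g
  have pairSplit_comp_swap : pairSplit hab (g ∘ Equiv.swap a b) =
      ((pairSplit hab g).1.swap, (pairSplit hab g).2) := by
    ext t
    · simp [pairSplit]
    · simp [pairSplit]
    · exact congrArg g (Equiv.swap_apply_of_ne_of_ne t.2.1 t.2.2)
  change (1 : Matrix (n × n) (n × n) R) (pairSplit hab f).1 (pairSplit hab g).1.swap *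
    (1 : Matrix _ _ R) (pairSplit hab f).2 (pairSplit hab g).2 =
      (1 : Matrix _ _ R) f (g ∘ Equiv.swap a b)
  rw [one_apply, one_apply, one_apply, ite_zero_mul_ite_zero, mul_one]
  refine if_congr ?_ rfl rfl
  rw [← (pairSplit hab).apply_eq_iff_eq, pairSplit_comp_swap]
  exact (Prod.ext_iff (y := (_, _))).symm

variable [Fintype n]

theorem commute_onPair {T T' : Matrix (n × n) (n × n) R} (h : Commute T T') (Z) :
    Commute (onPair hab T 1) (onPair hab T' Z) := by
  rw [Commute, SemiconjBy, onPair_mul, onPair_mul, h.eq, mul_one, one_mul]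

theorem apply_comp_swap_of_commute_onPair_flip {Y : Matrix (ι → n) (ι → n) R}
    (hY : Commute (onPair hab ((1 : Matrix (n × n) (n × n) R).submatrix id Prod.swap) 1) Y)
    (f g : ι → n) : Y (f ∘ Equiv.swap a b) (g ∘ Equiv.swap a b) = Y f g := by
  rw [onPair_flip, Commute, SemiconjBy, one_submatrix_mul, ← Equiv.coe_refl, mul_submatrix_one,
    ← ext_iff] at hY
  refine (hY (f ∘ Equiv.swap a b) g).symm.trans (congrArg (Y · g) ?_)
  exact ((Equiv.swap a b).arrowCongr (.refl n)).symm_apply_apply f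

end OnPair

section QuantumOperators

variable {m N : ℕ}

theorem q_ne_zero : q ≠ 0 :=
  RatFunc.X_ne_zero

theorem place_eq_piKronecker (B A C : Matrix (Fin m) (Fin m) K) (k : Fin N) :
    place m N B A C k = piKronecker fun t => if t < k then B else if t = k then A else C := by
  ext f g
  rw [place, piKronecker_apply]
  refine Finset.prod_congr rfl fun t _ => ?_
  split_ifs <;> rfl

theorem mk_ne_mk_succ {i : ℕ} (h : i + 1 < N) :
    (⟨i, Nat.lt_of_succ_lt h⟩ : Fin N) ≠ ⟨i + 1, h⟩ :=
  fun hi => by simp at hi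

theorem Rop0_eq_onPair (i : ℕ) (h : i + 1 < N) :
    Rop0 m N i h = onPair (mk_ne_mk_succ h) (R0mat m) 1 := by
  ext f g
  refine congrArg₂ (· * ·) rfl ?_
  rw [← piKronecker_one, prod_eq_mul_mul_prod_compl_pair (mk_ne_mk_succ h)]
  simp only [true_or, or_true, if_true, one_mul]
  refine Finset.prod_congr rfl fun t _ => if_neg ?_
  rintro (ht | ht)
  exacts [t.2.1 (Fin.ext ht), t.2.2 (Fin.ext ht)]

theorem transpose_R0mat : (R0mat m)ᵀ = R0mat m := by
  ext ⟨x, y⟩ ⟨u, v⟩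
  simp only [transpose_apply, R0mat, Prod.mk.injEq]
  grind

theorem transpose_Rop0 (i : ℕ) (h : i + 1 < N) : (Rop0 m N i h)ᵀ = Rop0 m N i h := by
  rw [Rop0_eq_onPair, transpose_onPair, transpose_R0mat, transpose_one]

theorem mul_R0mat_apply (T : Matrix (Fin m × Fin m) (Fin m × Fin m) K) (p : Fin m × Fin m)
    (u v : Fin m) : (T * R0mat m) p (u, v) = if u = v then q⁻¹ * T p (u, v) else
      T p (v, u) + if v < u then (q⁻¹ - q) * T p (u, v) else 0 := by
  have hswap (r : Fin m × Fin m) : (r.1 = v ∧ r.2 = u) ↔ r = (v, u) := by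
    rw [Prod.ext_iff]
  simp only [mul_apply, R0mat, hswap]
  split_ifs <;> simp [*, mul_add, Finset.sum_add_distrib, mul_comm]

theorem R0mat_mul_apply (T : Matrix (Fin m × Fin m) (Fin m × Fin m) K) (x y : Fin m)
    (p : Fin m × Fin m) : (R0mat m * T) (x, y) p = if x = y then q⁻¹ * T (x, y) p else
      T (y, x) p + if y < x then (q⁻¹ - q) * T (x, y) p else 0 := by
  rw [← transpose_apply (R0mat m * T), transpose_mul, transpose_R0mat, mul_R0mat_apply]
  rfl

theorem commute_R0mat_diagonal (d : Fin m → K) :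
    Commute (R0mat m) (diagonal d ⊗ₖ diagonal d) := by
  ext ⟨x, y⟩ ⟨u, v⟩
  rw [R0mat_mul_apply, mul_R0mat_apply]
  simp only [kronecker_apply, diagonal_apply]
  grind

theorem commute_R0mat_coproduct_Emat (j : ℕ) :
    Commute (R0mat m) (Emat m j ⊗ₖ KmatInv m j + 1 ⊗ₖ Emat m j) := by
  ext ⟨x, y⟩ ⟨u, v⟩
  have hq := mul_inv_cancel₀ q_ne_zero
  rw [R0mat_mul_apply, mul_R0mat_apply]
  simp only [Matrix.add_apply, kronecker_apply, Emat, KmatInv, diagonal_apply, one_apply,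
    Fin.ext_iff, Fin.lt_def]
  by_cases hx : (x : ℕ) = j <;> by_cases hy : (y : ℕ) = j <;>
    by_cases hu : (u : ℕ) = j + 1 <;> by_cases hv : (v : ℕ) = j + 1 <;> grind

theorem Kmat_mul_KmatInv (j : ℕ) : Kmat m j * KmatInv m j = 1 := by
  rw [Kmat, KmatInv, diagonal_mul_diagonal, ← diagonal_one]
  congr 1 with t
  split_ifs <;> simp [q_ne_zero]

theorem smul_Kmat_mul_transpose_Emat (j : ℕ) : q • (Kmat m j * (Emat m j)ᵀ) = Fmat m j := by
  ext x y
  rw [Matrix.smul_apply, smul_eq_mul, Kmat, diagonal_mul, Fmat, transpose_apply, Emat]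
  split_ifs <;> grind [q_ne_zero]

theorem coproduct_Fmat_eq (j : ℕ) :
    Fmat m j ⊗ₖ 1 + Kmat m j ⊗ₖ Fmat m j =
      q • ((Kmat m j ⊗ₖ Kmat m j) * (Emat m j ⊗ₖ KmatInv m j + 1 ⊗ₖ Emat m j)ᵀ) := by
  have hK : (KmatInv m j)ᵀ = KmatInv m j := diagonal_transpose _
  rw [transpose_add, ← kroneckerMap_transpose, ← kroneckerMap_transpose, mul_add,
    ← mul_kronecker_mul, ← mul_kronecker_mul, smul_add, ← smul_kronecker, ← kronecker_smul,
    smul_Kmat_mul_transpose_Emat, hK, Kmat_mul_KmatInv, transpose_one, mul_one]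

theorem commute_R0mat_coproduct_Fmat (j : ℕ) :
    Commute (R0mat m) (Fmat m j ⊗ₖ 1 + Kmat m j ⊗ₖ Fmat m j) := by
  have hE := congrArg transpose (commute_R0mat_coproduct_Emat (m := m) j).eq
  rw [transpose_mul, transpose_mul, transpose_R0mat] at hE
  rw [coproduct_Fmat_eq]
  exact ((commute_R0mat_diagonal _).mul_right hE.symm).smul_right q

theorem commute_Rop0_piKronecker {c : Fin N → Matrix (Fin m) (Fin m) K} (i : ℕ) (h : i + 1 < N)
    (hc : Commute (R0mat m) (c ⟨i, Nat.lt_of_succ_lt h⟩ ⊗ₖ c ⟨i + 1, h⟩)) :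
    Commute (Rop0 m N i h) (piKronecker c) := by
  rw [Rop0_eq_onPair, piKronecker_eq_onPair (mk_ne_mk_succ h)]
  exact commute_onPair _ hc _

theorem commute_Rop0_sum_place {B A C : Matrix (Fin m) (Fin m) K}
    (hB : Commute (R0mat m) (B ⊗ₖ B)) (hC : Commute (R0mat m) (C ⊗ₖ C))
    (hA : Commute (R0mat m) (A ⊗ₖ C + B ⊗ₖ A)) (i : ℕ) (h : i + 1 < N) :
    Commute (Rop0 m N i h) (∑ k, place m N B A C k) := by
  have hab := mk_ne_mk_succ h
  set a : Fin N := ⟨i, Nat.lt_of_succ_lt h⟩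
  set b : Fin N := ⟨i + 1, h⟩
  rw [sum_eq_add_add_sum_compl_pair hab]
  refine .add_right ?_ (.sum_right _ _ _ fun k _ => ?_)
  · have rest_eq : (fun t : {t // t ≠ a ∧ t ≠ b} => if t < b then B else if t = b then A else C) =
        fun t : {t // t ≠ a ∧ t ≠ b} => if t < a then B else if t = a then A else C := by
      funext t
      grind
    rw [Rop0_eq_onPair, place_eq_piKronecker, place_eq_piKronecker, piKronecker_eq_onPair hab,
      piKronecker_eq_onPair hab, rest_eq, ← onPair_add]
    refine commute_onPair _ ?_ _
    convert hA using 3 <;> grind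
  · obtain ⟨k, hka, hkb⟩ := k
    rw [place_eq_piKronecker]
    refine commute_Rop0_piKronecker i h ?_
    rcases lt_or_gt_of_ne hka with hk | hk
    · convert hC using 2 <;> grind
    · convert hB using 2 <;> grind

theorem commute_of_mem_HeckeGens_of_mem_QGGens {T Z : Matrix (Fin N → Fin m) (Fin N → Fin m) K}
    (hT : T ∈ HeckeGens m N) (hZ : Z ∈ QGGens m N) : Commute T Z := by
  have h_one : Commute (R0mat m) (1 ⊗ₖ 1) := by
    simpa only [one_kronecker_one] using Commute.one_right _
  obtain ⟨i, h, rfl⟩ := hT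
  rcases hZ with ⟨j, _, rfl | rfl⟩ | ⟨l, _, rfl | rfl⟩
  · exact commute_Rop0_sum_place h_one (commute_R0mat_diagonal _)
      (commute_R0mat_coproduct_Emat j) i h
  · exact commute_Rop0_sum_place (commute_R0mat_diagonal _) h_one
      (commute_R0mat_coproduct_Fmat j) i h
  · exact commute_Rop0_piKronecker i h (commute_R0mat_diagonal _)
  · exact commute_Rop0_piKronecker i h (commute_R0mat_diagonal _)

end QuantumOperators

section Specialization

theorem algebraMap_X_eq_q : algebraMap ℚ[X] K X = q :=
  RatFunc.algebraMap_X

/-- `a : ℚ(q)` takes the value `a₀` at `q = 1`. The only denominator allowed is `q`, as the entries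
of the quantum operators have no other. -/
def SpecializesTo (a : K) (a₀ : ℚ) : Prop :=
  ∃ p : ℚ[X], algebraMap ℚ[X] K p = q * a ∧ p.eval 1 = a₀

theorem specializesTo_zero : SpecializesTo 0 0 :=
  ⟨0, by simp, by simp⟩

theorem specializesTo_one : SpecializesTo 1 1 :=
  ⟨X, by rw [algebraMap_X_eq_q, mul_one], by simp⟩

theorem specializesTo_q : SpecializesTo q 1 :=
  ⟨X ^ 2, by rw [map_pow, algebraMap_X_eq_q, sq], by simp⟩

theorem specializesTo_q_inv : SpecializesTo q⁻¹ 1 :=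
  ⟨1, by simp [q_ne_zero], by simp⟩

theorem specializesTo_q_inv_sub_q : SpecializesTo (q⁻¹ - q) 0 :=
  ⟨1 - X ^ 2, by rw [map_sub, map_one, map_pow, algebraMap_X_eq_q, mul_sub,
    mul_inv_cancel₀ q_ne_zero, sq], by simp⟩

variable {n n' : Type*}

theorem specializesTo_diagonal [DecidableEq n] {d : n → K} (hd : ∀ i, SpecializesTo (d i) 1)
    (i j : n) : SpecializesTo (diagonal d i j) ((1 : Matrix n n ℚ) i j) := by
  rw [diagonal_apply, one_apply]
  split_ifs
  exacts [hd i, specializesTo_zero]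

theorem specializesTo_single [DecidableEq n] (i j x y : n) :
    SpecializesTo (single i j (1 : K) x y) (single i j (1 : ℚ) x y) := by
  rw [single_apply, single_apply]
  split_ifs
  exacts [specializesTo_one, specializesTo_zero]

theorem exists_matrix_map_eq_of_specializesTo {A : Matrix n n' K} {A₀ : Matrix n n' ℚ}
    (hA : ∀ i j, SpecializesTo (A i j) (A₀ i j)) : ∃ P : Matrix n n' ℚ[X],
      P.map (algebraMap ℚ[X] K) = q • A ∧ P.map (evalRingHom 1) = A₀ := by
  choose P hPA hPA₀ using hA
  exact ⟨of P, ext hPA, ext hPA₀⟩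

variable [Fintype n] [DecidableEq n]

/-- The values at `q = 1` of those elements of `S` all of whose entries are polynomials in `q`. -/
def specialization (S : Subalgebra K (Matrix n n K)) : Subalgebra ℚ (Matrix n n ℚ) :=
  ((S.restrictScalars ℚ).comap (IsScalarTower.toAlgHom ℚ ℚ[X] K).mapMatrix).map
    (aeval (1 : ℚ)).mapMatrix

theorem mem_specialization {S : Subalgebra K (Matrix n n K)} {Y : Matrix n n ℚ} :
    Y ∈ specialization S ↔ ∃ P : Matrix n n ℚ[X],
      P.map (algebraMap ℚ[X] K) ∈ S ∧ P.map (evalRingHom 1) = Y := by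
  rw [← coe_aeval_eq_evalRingHom]
  rfl

end Specialization

section ClassicalLimit

variable {m N : ℕ}

theorem Emat_eq_single {i j : Fin m} (hij : (i : ℕ) + 1 = j) : Emat m i = single i j 1 := by
  ext x y
  rw [Emat, single_apply]
  exact if_congr (by omega) rfl rfl

theorem Fmat_eq_single {i j : Fin m} (hij : (i : ℕ) + 1 = j) : Fmat m i = single j i 1 := by
  ext x y
  rw [Fmat, single_apply]
  exact if_congr (by omega) rfl rfl

theorem specializesTo_one_apply (x y : Fin m) :
    SpecializesTo ((1 : Matrix (Fin m) (Fin m) K) x y) ((1 : Matrix (Fin m) (Fin m) ℚ) x y) :=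
  specializesTo_diagonal (fun _ => specializesTo_one) x y

theorem specializesTo_Kmat (i : ℕ) (x y : Fin m) :
    SpecializesTo (Kmat m i x y) ((1 : Matrix (Fin m) (Fin m) ℚ) x y) := by
  refine specializesTo_diagonal (fun t => ?_) x y
  split_ifs
  exacts [specializesTo_q, specializesTo_q_inv, specializesTo_one]

theorem specializesTo_KmatInv (i : ℕ) (x y : Fin m) :
    SpecializesTo (KmatInv m i x y) ((1 : Matrix (Fin m) (Fin m) ℚ) x y) := by
  refine specializesTo_diagonal (fun t => ?_) x y
  split_ifs
  exacts [specializesTo_q_inv, specializesTo_q, specializesTo_one]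

theorem specializesTo_R0mat (x y : Fin m × Fin m) :
    SpecializesTo (R0mat m x y) ((1 : Matrix _ _ ℚ).submatrix id Prod.swap x y) := by
  obtain ⟨x₁, x₂⟩ := x
  obtain ⟨y₁, y₂⟩ := y
  have := specializesTo_zero
  have := specializesTo_one
  have := specializesTo_q_inv
  have := specializesTo_q_inv_sub_q
  simp only [R0mat, submatrix_apply, one_apply, id, Prod.swap, Prod.mk.injEq]
  grind

theorem glAction_mem_specialization_of_sum_place_mem
    {S : Subalgebra K (Matrix (Fin N → Fin m) (Fin N → Fin m) K)}
    {B A C : Matrix (Fin m) (Fin m) K} {A₀ : Matrix (Fin m) (Fin m) ℚ}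
    (hB : ∀ x y, SpecializesTo (B x y) ((1 : Matrix (Fin m) (Fin m) ℚ) x y))
    (hA : ∀ x y, SpecializesTo (A x y) (A₀ x y))
    (hC : ∀ x y, SpecializesTo (C x y) ((1 : Matrix (Fin m) (Fin m) ℚ) x y))
    (hS : ∑ k, place m N B A C k ∈ S) : glAction (Fin N) A₀ ∈ specialization S := by
  obtain ⟨b, hbK, hb₁⟩ := exists_matrix_map_eq_of_specializesTo hB
  obtain ⟨a, haK, ha₁⟩ := exists_matrix_map_eq_of_specializesTo hA
  obtain ⟨c, hcK, hc₁⟩ := exists_matrix_map_eq_of_specializesTo hC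
  let P (k : Fin N) : Matrix (Fin N → Fin m) (Fin N → Fin m) ℚ[X] :=
    piKronecker fun t => if t < k then b else if t = k then a else c
  have map_P (k : Fin N) : (P k).map (algebraMap ℚ[X] K) = q ^ N • place m N B A C k := by
    have := (piKronecker (R := K)).map_smul_univ (fun _ : Fin N => q)
      fun t => if t < k then B else if t = k then A else C
    rw [Finset.prod_const, Finset.card_univ, Fintype.card_fin] at this
    rw [place_eq_piKronecker, ← this, map_piKronecker]
    congr with t : 1
    split_ifs <;> assumption
  have eval_P (k : Fin N) : (P k).map (evalRingHom 1) = piKronecker (Pi.mulSingle k A₀) := by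
    rw [map_piKronecker]
    congr with t : 1
    rw [Pi.mulSingle_apply]
    split_ifs with h₁ h₂ <;> grind
  refine mem_specialization.mpr ⟨∑ k, P k, ?_, ?_⟩
  · rw [← RingHom.mapMatrix_apply, map_sum]
    simp only [RingHom.mapMatrix_apply, map_P, ← Finset.smul_sum]
    exact S.smul_mem hS _
  · rw [← RingHom.mapMatrix_apply, map_sum, glAction_apply]
    exact Finset.sum_congr rfl fun k _ => eval_P k

theorem q_sub_one_ne_zero : q - 1 ≠ 0 := by
  rw [← algebraMap_X_eq_q, ← map_one (algebraMap ℚ[X] K), ← map_sub, ← C_1]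
  exact (map_ne_zero_iff _ (IsFractionRing.injective ℚ[X] K)).mpr (X_sub_C_ne_zero 1)

theorem kpow_Lmat (l : Fin m) :
    kpow m N (Lmat m l) = diagonal fun f => q ^ Finset.card {t | f t = l} := by
  refine (piKronecker_diagonal _).trans (congrArg diagonal ?_)
  funext f
  simp only [← Fin.ext_iff, Finset.prod_ite, Finset.prod_const, one_pow, mul_one]

theorem glAction_single_self_mem_specialization
    {S : Subalgebra K (Matrix (Fin N → Fin m) (Fin N → Fin m) K)} {l : Fin m}
    (hS : kpow m N (Lmat m l) ∈ S) : glAction (Fin N) (single l l 1) ∈ specialization S := by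
  let P : Matrix (Fin N → Fin m) (Fin N → Fin m) ℚ[X] :=
    diagonal fun f => ∑ r ∈ Finset.range (Finset.card {t | f t = l}), X ^ r
  have map_P : P.map (algebraMap ℚ[X] K) = (q - 1)⁻¹ • (kpow m N (Lmat m l) - 1) := by
    rw [kpow_Lmat, ← diagonal_one, diagonal_sub, ← diagonal_smul, diagonal_map (map_zero _)]
    congr with f
    rw [map_sum, Pi.smul_apply, smul_eq_mul, ← mul_geom_sum,
      inv_mul_cancel_left₀ q_sub_one_ne_zero]
    exact Finset.sum_congr rfl fun r _ => by rw [map_pow, algebraMap_X_eq_q]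
  refine mem_specialization.mpr ⟨P, ?_, ?_⟩
  · rw [map_P]
    exact S.smul_mem (S.sub_mem hS S.one_mem) _
  · rw [glAction_single_self, diagonal_map (map_zero _)]
    congr with f
    simp

theorem glAction_mem_specialization_adjoin_QGGens (a : Matrix (Fin m) (Fin m) ℚ) :
    glAction (Fin N) a ∈ specialization (Algebra.adjoin K (QGGens m N)) := by
  let L := (lieSubalgebraOfSubalgebra ℚ _
    (specialization (Algebra.adjoin K (QGGens m N)))).comap (glAction (Fin N))
  suffices L = ⊤ from (this.symm ▸ trivial : a ∈ L)
  refine lieSubalgebra_eq_top_of_single_mem (fun l => ?_) fun i j hij => ⟨?_, ?_⟩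
  · exact glAction_single_self_mem_specialization
      (Algebra.subset_adjoin (.inr ⟨l, l.2, .inl rfl⟩))
  · refine glAction_mem_specialization_of_sum_place_mem (A := Emat m i) specializesTo_one_apply
      (fun x y => ?_) (specializesTo_KmatInv i)
      (Algebra.subset_adjoin (.inl ⟨i, hij ▸ j.2, .inl rfl⟩))
    rw [Emat_eq_single hij]
    exact specializesTo_single i j x y
  · refine glAction_mem_specialization_of_sum_place_mem (A := Fmat m i) (specializesTo_Kmat i)
      (fun x y => ?_) specializesTo_one_apply
      (Algebra.subset_adjoin (.inl ⟨i, hij ▸ j.2, .inr rfl⟩))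
    rw [Fmat_eq_single hij]
    exact specializesTo_single j i x y

theorem eval_one_comp_swap_of_commute_Rop0 {P : Matrix (Fin N → Fin m) (Fin N → Fin m) ℚ[X]}
    {i : ℕ} {h : i + 1 < N} (hP : Commute (Rop0 m N i h) (P.map (algebraMap ℚ[X] K)))
    (f g : Fin N → Fin m) :
    let σ := Equiv.swap (⟨i, Nat.lt_of_succ_lt h⟩ : Fin N) ⟨i + 1, h⟩
    P.map (evalRingHom 1) (f ∘ σ) (g ∘ σ) = P.map (evalRingHom 1) f g := by
  obtain ⟨T, hTK, hT₁⟩ := exists_matrix_map_eq_of_specializesTo (specializesTo_R0mat (m := m))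
  have hTP : Commute (onPair (mk_ne_mk_succ h) T 1) P := by
    refine Matrix.map_injective (IsFractionRing.injective ℚ[X] K) ?_
    simp only [Matrix.map_mul]
    rw [map_onPair, Matrix.map_one _ (map_zero _) (map_one _),
      hTK, onPair_smul, ← Rop0_eq_onPair]
    exact (hP.smul_left q).eq
  refine apply_comp_swap_of_commute_onPair_flip (mk_ne_mk_succ h) ?_ f g
  have := hTP.map (evalRingHom (1 : ℚ)).mapMatrix
  rwa [RingHom.mapMatrix_apply, map_onPair, Matrix.map_one _ (map_zero _) (map_one _), hT₁] at this

theorem eval_one_comp_perm_of_commute_Rop0 {P : Matrix (Fin N → Fin m) (Fin N → Fin m) ℚ[X]}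
    (hP : ∀ i h, Commute (Rop0 m N i h) (P.map (algebraMap ℚ[X] K))) (σ : Equiv.Perm (Fin N))
    (f g : Fin N → Fin m) :
    P.map (evalRingHom 1) (f ∘ σ) (g ∘ σ) = P.map (evalRingHom 1) f g := by
  cases N with
  | zero => rw [Subsingleton.elim (f ∘ σ) f, Subsingleton.elim (g ∘ σ) g]
  | succ n =>
    have hσ : σ ∈ Submonoid.closure (Set.range fun i : Fin n => Equiv.swap i.castSucc i.succ) :=
      Equiv.Perm.mclosure_swap_castSucc_succ n ▸ Submonoid.mem_top σ
    induction hσ using Submonoid.closure_induction generalizing f g with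
    | mem σ hσ =>
      obtain ⟨i, rfl⟩ := hσ
      exact eval_one_comp_swap_of_commute_Rop0 (hP i (by omega)) f g
    | one => rfl
    | mul σ τ _ _ hσ hτ => exact (hτ (f ∘ σ) (g ∘ σ)).trans (hσ f g)

end ClassicalLimit

section Duality

variable {m N : ℕ}

theorem adjoin_QGGens_le_centralizer : Algebra.adjoin K (QGGens m N) ≤
    Subalgebra.centralizer K (Algebra.adjoin K (HeckeGens m N) : Set _) := by
  have hA : Algebra.adjoin K (HeckeGens m N) ≤ Subalgebra.centralizer K (QGGens m N) :=
    Algebra.adjoin_le fun T hT Z hZ => (commute_of_mem_HeckeGens_of_mem_QGGens hT hZ).eq.symm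
  exact Algebra.adjoin_le fun Z hZ T hT => (hA hT Z hZ).symm

theorem exists_eq_add_smul_of_map_mem_centralizer
    {P : Matrix (Fin N → Fin m) (Fin N → Fin m) ℚ[X]}
    (hP : P.map (algebraMap ℚ[X] K) ∈
      Subalgebra.centralizer K (Algebra.adjoin K (HeckeGens m N) : Set _)) :
    ∃ Y Z : Matrix (Fin N → Fin m) (Fin N → Fin m) ℚ[X],
      Y.map (algebraMap ℚ[X] K) ∈ Algebra.adjoin K (QGGens m N) ∧
        P = Y + (X - Polynomial.C (1 : ℚ)) • Z := by
  obtain ⟨Y, hY, hYP⟩ := mem_specialization.mp <|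
    mem_of_glAction_mem _ glAction_mem_specialization_adjoin_QGGens <|
      eval_one_comp_perm_of_commute_Rop0 fun i h => hP _ (Algebra.subset_adjoin ⟨i, h, rfl⟩)
  have dvd_sub (f g) : X - Polynomial.C 1 ∣ P f g - Y f g := by
    rw [dvd_iff_isRoot, IsRoot.def, eval_sub]
    exact sub_eq_zero.mpr (congrFun₂ hYP f g).symm
  choose Z hZ using dvd_sub
  exact ⟨Y, of Z, hY, ext fun f g => eq_add_of_sub_eq' (hZ f g)⟩

theorem centralizer_adjoin_HeckeGens :
    Subalgebra.centralizer K (Algebra.adjoin K (HeckeGens m N) : Set _) =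
      Algebra.adjoin K (QGGens m N) := by
  refine le_antisymm ?_ adjoin_QGGens_le_centralizer
  refine Subalgebra.toSubmodule.le_iff_le.mp ?_
  exact le_of_forall_exists_eq_add_smul (Algebra.linearMap ℚ[X] K).mapMatrix
    (X_sub_C_ne_zero (1 : ℚ)) (not_isUnit_X_sub_C 1)
    adjoin_QGGens_le_centralizer
    fun _ => exists_eq_add_smul_of_map_mem_centralizer

theorem transpose_mem_adjoin_HeckeGens {a : Matrix (Fin N → Fin m) (Fin N → Fin m) K}
    (ha : a ∈ Algebra.adjoin K (HeckeGens m N)) : aᵀ ∈ Algebra.adjoin K (HeckeGens m N) := by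
  induction ha using Algebra.adjoin_induction with
  | mem a ha =>
    obtain ⟨i, h, rfl⟩ := ha
    rw [transpose_Rop0]
    exact Algebra.subset_adjoin ⟨i, h, rfl⟩
  | algebraMap r =>
    rw [algebraMap_eq_diagonal, diagonal_transpose, ← algebraMap_eq_diagonal]
    exact Subalgebra.algebraMap_mem _ r
  | add a b _ _ ha hb => exact transpose_add a b ▸ add_mem ha hb
  | mul a b _ _ ha hb => exact transpose_mul a b ▸ mul_mem hb ha

end Duality

end SchurWeyl

/-- Quantum Schur–Weyl duality (double centralizer property): the subalgebra
`A` of `End_K(V^{⊗N})` generated by the Hecke operators and the subalgebra `B`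
generated by the quantum group operators are each other's centralizers. -/
theorem schur_weyl_double_centralizer (m N : ℕ) (hN : 1 ≤ N) :
    Subalgebra.centralizer K ((Algebra.adjoin K (HeckeGens m N) : Subalgebra K
        (Matrix (Fin N → Fin m) (Fin N → Fin m) K)) : Set _)
      = Algebra.adjoin K (QGGens m N) ∧
    Subalgebra.centralizer K ((Algebra.adjoin K (QGGens m N) : Subalgebra K
        (Matrix (Fin N → Fin m) (Fin N → Fin m) K)) : Set _)
      = Algebra.adjoin K (HeckeGens m N) := by
  have hA := SchurWeyl.centralizer_adjoin_HeckeGens (m := m) (N := N)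
  refine ⟨hA, ?_⟩
  rw [← hA]
  exact SchurWeyl.centralizer_centralizer_of_transpose_mem _
    fun _ => SchurWeyl.transpose_mem_adjoin_HeckeGens
end
end

section
/- The kernel of the quantum antisymmetrizer p := [2]^{−1} · (q^{−1}·Id_{V⊗V} − R) equals the K-span of the set I := {e_i ⊗ e_i : 1 ≤ i ≤ m} ∪ {e_i ⊗ e_j + (−1)^{|i||j|} q^{−1} e_j ⊗ e_i : 1 ≤ i < j ≤ m+n}; equivalently, span(I) is exactly the q^{−1}-eigenspace of R. (Hence the quantum exterior square ⋀_q^2(V) := (V ⊗ V)/⟨I⟩ is realized as the image of p.) -/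
set_option synthInstance.maxHeartbeats 400000
set_option maxHeartbeats 1000000

noncomputable section

/-- The degree-2 quantum antisymmetrizer `p = [2]⁻¹·(q⁻¹·Id - R)` on `V ⊗ V`,
where `[2] = q + q⁻¹`. -/
def pA (m n : ℕ) :
    Matrix (Fin (m + n) × Fin (m + n)) (Fin (m + n) × Fin (m + n)) K :=
  (q + q⁻¹)⁻¹ • (q⁻¹ • (1 : Matrix (Fin (m + n) × Fin (m + n)) (Fin (m + n) × Fin (m + n)) K) - Rmat m n)

/-- The basis vector `eᵢ ⊗ eⱼ` of `V ⊗ V`. -/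
def eV (m n : ℕ) (i j : Fin (m + n)) : Fin (m + n) × Fin (m + n) → K :=
  Pi.single (i, j) 1

/-- The set `I = {eᵢ ⊗ eᵢ : i of parity 0} ∪
{eᵢ ⊗ eⱼ + (-1)^{|i||j|} q⁻¹ eⱼ ⊗ eᵢ : i < j}` of defining relations of the
quantum exterior square (indices 0-based, so parity 0 means `i < m`). -/
def Iset (m n : ℕ) : Set (Fin (m + n) × Fin (m + n) → K) :=
  { x | (∃ i : Fin (m + n), (i : ℕ) < m ∧ x = eV m n i i) ∨
        (∃ i j : Fin (m + n), i < j ∧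
          x = eV m n i j + (sgn m i j * q⁻¹) • eV m n j i) }

/-!
`R` satisfies a Hecke relation with eigenvalues `q⁻¹` and `-q`, which are distinct as `q` is
transcendental. Hence the `q⁻¹`-eigenspace is the range of `R + q`, and `R + q` sends each basis
vector `eᵢ ⊗ eⱼ` to `0` or to a scalar multiple of an element of `I`.
-/

theorem eq_eigenspace_of_range_sub_le {R M : Type*} [CommRing R] [AddCommGroup M] [Module R M]
    {f : Module.End R M} {μ ν : R} {S : Submodule R M} (hμν : IsUnit (μ - ν))
    (hS : S ≤ f.eigenspace μ) (hrange : LinearMap.range (f - ν • 1) ≤ S) :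
    S = f.eigenspace μ := by
  refine le_antisymm hS fun x hx => ?_
  rw [Module.End.mem_eigenspace_iff] at hx
  have hfx : (f - ν • 1) x = (μ - ν) • x := by
    rw [LinearMap.sub_apply, LinearMap.smul_apply, Module.End.one_apply, hx, sub_smul]
  rw [← S.smul_mem_iff_of_isUnit hμν, ← hfx]
  exact hrange (LinearMap.mem_range_self _ x)

theorem ker_toLin'_smul_smul_one_sub {F ι : Type*} [Field F] [Fintype ι] [DecidableEq ι]
    (A : Matrix ι ι F) (μ : F) {c : F} (hc : c ≠ 0) :
    LinearMap.ker (Matrix.toLin' (c • (μ • (1 : Matrix ι ι F) - A))) =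
      Module.End.eigenspace (Matrix.toLin' A) μ := by
  rw [map_smul, LinearMap.ker_smul _ _ hc, map_sub, map_smul, Matrix.toLin'_one,
    ← LinearMap.ker_neg, neg_sub, Module.End.eigenspace_def, Module.End.one_eq_id]

section HeckeBlock

/-! For `i < j` the R-matrix acts in this way on `u = eᵢ ⊗ eⱼ` and `v = eⱼ ⊗ eᵢ`, with `t = q` and
`s = (-1)^{|i||j|}`; the eigenvalues of the block are `t⁻¹` and `-t`. -/

variable {F M : Type*} [Field F] [AddCommGroup M] [Module F M] {f : Module.End F M} {t s : F}
  {u v : M}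

theorem heckeBlock_apply_add_smul (ht : t ≠ 0) (hs : s * s = 1) (hu : f u = s • v)
    (hv : f v = s • u + (t⁻¹ - t) • v) :
    f (u + (s * t⁻¹) • v) = t⁻¹ • (u + (s * t⁻¹) • v) := by
  rw [map_add, map_smul, hu, hv]
  linear_combination (norm := module) (t⁻¹ * hs) • u - (s * mul_inv_cancel₀ ht) • v

theorem heckeBlock_apply_left_add_smul (ht : t ≠ 0) (hu : f u = s • v) :
    f u + t • u = t • (u + (s * t⁻¹) • v) := by
  rw [hu]
  linear_combination (norm := module) -(s * mul_inv_cancel₀ ht) • v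

theorem heckeBlock_apply_right_add_smul (hs : s * s = 1) (hv : f v = s • u + (t⁻¹ - t) • v) :
    f v + t • v = s • (u + (s * t⁻¹) • v) := by
  rw [hv]
  linear_combination (norm := module) -(t⁻¹ * hs) • v

end HeckeBlock

theorem ratFunc_X_add_inv_X_ne_zero (F : Type*) [Field F] :
    (RatFunc.X + RatFunc.X⁻¹ : RatFunc F) ≠ 0 := by
  intro h
  have hdeg := congrArg RatFunc.intDegree (eq_neg_of_add_eq_zero_left h)
  rw [RatFunc.intDegree_neg, RatFunc.intDegree_inv, RatFunc.intDegree_X] at hdeg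
  lia

theorem q_add_inv_q_ne_zero : q + q⁻¹ ≠ 0 := ratFunc_X_add_inv_X_ne_zero ℚ

theorem sgn_mul_self (m : ℕ) {M : ℕ} (i j : Fin M) : sgn m i j * sgn m i j = 1 := by
  unfold sgn
  split_ifs <;> norm_num

theorem sgn_comm (m : ℕ) {M : ℕ} (i j : Fin M) : sgn m i j = sgn m j i := by
  simp only [sgn, and_comm]

section

variable {m n : ℕ} {i j : Fin (m + n)}

theorem toLin'_Rmat_eV_self (i : Fin (m + n)) :
    Matrix.toLin' (Rmat m n) (eV m n i i) = (if (i : ℕ) < m then q⁻¹ else -q) • eV m n i i := by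
  ext p
  simp [eV, Rmat, Pi.single_apply]

theorem toLin'_Rmat_eV_of_lt (hij : i < j) :
    Matrix.toLin' (Rmat m n) (eV m n i j) = sgn m i j • eV m n j i := by
  ext p
  simp [eV, Rmat, Pi.single_apply, Prod.ext_iff, hij.ne, hij.not_gt]

theorem toLin'_Rmat_eV_of_gt (hij : i < j) :
    Matrix.toLin' (Rmat m n) (eV m n j i) = sgn m i j • eV m n i j + (q⁻¹ - q) • eV m n j i := by
  ext p
  simp [eV, Rmat, Pi.single_apply, Prod.ext_iff, hij, hij.ne', sgn_comm m j i]

theorem eV_self_mem_span_Iset (hi : (i : ℕ) < m) :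
    eV m n i i ∈ Submodule.span K (Iset m n) :=
  Submodule.subset_span (Or.inl ⟨i, hi, rfl⟩)

theorem eV_add_smul_eV_mem_span_Iset (hij : i < j) :
    eV m n i j + (sgn m i j * q⁻¹) • eV m n j i ∈ Submodule.span K (Iset m n) :=
  Submodule.subset_span (Or.inr ⟨i, j, hij, rfl⟩)

variable (m n)

theorem span_Iset_le_eigenspace :
    Submodule.span K (Iset m n) ≤ Module.End.eigenspace (Matrix.toLin' (Rmat m n)) q⁻¹ := by
  refine Submodule.span_le.2 ?_
  rintro _ (⟨i, hi, rfl⟩ | ⟨i, j, hij, rfl⟩) <;>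
    rw [SetLike.mem_coe, Module.End.mem_eigenspace_iff]
  · rw [toLin'_Rmat_eV_self, if_pos hi]
  · exact heckeBlock_apply_add_smul q_ne_zero (sgn_mul_self m i j) (toLin'_Rmat_eV_of_lt hij)
      (toLin'_Rmat_eV_of_gt hij)

theorem toLin'_Rmat_add_smul_eV_mem_span_Iset (i j : Fin (m + n)) :
    Matrix.toLin' (Rmat m n) (eV m n i j) + q • eV m n i j ∈ Submodule.span K (Iset m n) := by
  rcases lt_trichotomy i j with hij | rfl | hji
  · rw [heckeBlock_apply_left_add_smul q_ne_zero (toLin'_Rmat_eV_of_lt hij)]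
    exact Submodule.smul_mem _ _ (eV_add_smul_eV_mem_span_Iset hij)
  · rw [toLin'_Rmat_eV_self, ← add_smul]
    split_ifs with hi
    · exact Submodule.smul_mem _ _ (eV_self_mem_span_Iset hi)
    · rw [neg_add_cancel, zero_smul]
      exact Submodule.zero_mem _
  · rw [heckeBlock_apply_right_add_smul (sgn_mul_self m j i) (toLin'_Rmat_eV_of_gt hji)]
    exact Submodule.smul_mem _ _ (eV_add_smul_eV_mem_span_Iset hji)

theorem range_toLin'_Rmat_sub_neg_q_le_span_Iset :
    LinearMap.range (Matrix.toLin' (Rmat m n) - (-q) • 1) ≤ Submodule.span K (Iset m n) := by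
  rw [LinearMap.range_eq_map, ← (Pi.basisFun K (Fin (m + n) × Fin (m + n))).span_eq,
    Submodule.map_span_le]
  rintro _ ⟨⟨i, j⟩, rfl⟩
  rw [Pi.basisFun_apply, LinearMap.sub_apply, LinearMap.smul_apply, neg_smul, sub_neg_eq_add]
  exact toLin'_Rmat_add_smul_eV_mem_span_Iset m n i j

theorem span_Iset_eq_eigenspace :
    Submodule.span K (Iset m n) = Module.End.eigenspace (Matrix.toLin' (Rmat m n)) q⁻¹ := by
  refine eq_eigenspace_of_range_sub_le (ν := -q) ?_ (span_Iset_le_eigenspace m n)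
    (range_toLin'_Rmat_sub_neg_q_le_span_Iset m n)
  rw [sub_neg_eq_add, add_comm]
  exact q_add_inv_q_ne_zero.isUnit

end

/-- The kernel of the quantum antisymmetrizer `p = [2]⁻¹·(q⁻¹·Id - R)` equals
the `K`-span of the set `I` of defining relations of the quantum exterior
square; equivalently, `span I` is exactly the `q⁻¹`-eigenspace of `R`.
(Hence `⋀_q²(V) = (V ⊗ V)/⟨I⟩` is realized as the image of `p`.) -/
theorem antisymmetrizer_kernel (m n : ℕ) :
    LinearMap.ker (Matrix.toLin' (pA m n)) = Submodule.span K (Iset m n) ∧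
    Submodule.span K (Iset m n)
      = Module.End.eigenspace (Matrix.toLin' (Rmat m n)) q⁻¹ := by
  have hspan := span_Iset_eq_eigenspace m n
  have hker := ker_toLin'_smul_smul_one_sub (Rmat m n) q⁻¹ (inv_ne_zero q_add_inv_q_ne_zero)
  exact ⟨hker.trans hspan.symm, hspan⟩
end
end
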